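/- Let β > 1 and h = 0, and let m^+ ∈ (0,1) be the largest solution of z = tanh(βz). Set r² = β(1−(m^+)²)² / (4 − 4β(1−(m^+)²)). Fix 0 < δ < 1/6, let ξ̃ be a real random variable with the Gaussian density of mean 0 and variance r², set ξ_N = ξ̃ 1{|ξ̃| ≤ N^δ}, and define ν_N(σ) = ½ E[∏_{i=1}^N ((1 + σ_i m^+)/2 + σ_i ξ_N/√N) + ∏_{i=1}^N ((1 − σ_i m^+)/2 + σ_i ξ_N/√N)] for σ ∈ {−1,+1}^N. Then H(μ_N | ν_N) → 0 and H(ν_N | μ_N) → 0 as N → ∞. -/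

import Mathlib

/-!
Both measures are mixtures of the same family `Q_θ`, the even mixture of the product measures
with spin means `θ` and `-θ` (`symW`).

* By the Hubbard–Stratonovich identity (`cw_weight_eq`), `μ_N` is a multiple of
  `∫_{y > 0} exp (-N (φ(y) - φ(βm))) Q_{tanh y} dy` with `φ(y) = y² / (2β) - log cosh y` (`phi`).
* Folding `t ↦ -t` (`nu_split`) and substituting `t = √N / 2 (tanh y - m)` (`core_subst`), `ν_N`
  is a mixture of `Q_{tanh y}` over the core `|tanh y - m| ≤ 2L`, `L = N^δ / √N`, plus the atom
  `Q_m` weighted by the Gaussian tail beyond `N^δ`.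

The variance `r²` is the one for which `φ(y) - φ(βm)` and `(tanh y - m)² / (8 r²)` agree to second
order at `y = βm` (`phi_cubic`). Hence on the core the two mixing densities are proportional up to
the factor `c_N = exp (C₁ N L³) (1 + C₂ L)` (`density_compare`), which tends to `1` because
`δ < 1/6`. The unknown constant of proportionality is eliminated by comparing total masses
(`mixture_compare`), and one gets `μ_N ≤ c ν_N + b` and `ν_N ≤ c' μ_N + a` with `c, c' → 1`. The
masses of `a` and `b` are `O(exp (-k N^(2δ)))`: for `a` this is the Gaussian tail, for `b` it follows
from the quadratic lower bound on `φ - φ(βm)` over the half-line (`phi_quadratic`,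
`laplace_tail`). As all atoms of both measures are at least `exp (-M N)`, such a domination forces
the relative entropies to vanish (`relEnt_le`, `tendsto_relEnt`).
-/

open Filter Real MeasureTheory

/-- Relative entropy (Kullback–Leibler divergence) between two probability mass
functions on a finite set. -/
noncomputable def relEnt {α : Type*} [Fintype α] (rho pion : α → ℝ) : ℝ :=
  ∑ x, rho x * Real.log (rho x / pion x)

/-! ### The hyperbolic tangent -/

lemma hasDerivAt_tanh' (y : ℝ) : HasDerivAt Real.tanh (1 - Real.tanh y ^ 2) y := by
  have h := (Real.hasDerivAt_sinh y).div (Real.hasDerivAt_cosh y) (Real.cosh_pos y).ne'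
  have e : Real.tanh = Real.sinh / Real.cosh := by
    ext x; simp [Real.tanh_eq_sinh_div_cosh]
  rw [e]
  refine h.congr_deriv ?_
  have := (Real.cosh_pos y).ne'
  rw [Pi.div_apply]
  field_simp

lemma continuous_tanh' : Continuous Real.tanh :=
  continuous_iff_continuousAt.2 fun y => (hasDerivAt_tanh' y).continuousAt

lemma strictMono_tanh' : StrictMono Real.tanh := by
  refine strictMono_of_hasDerivAt_pos hasDerivAt_tanh' fun y => ?_
  linarith [Real.tanh_sq_lt_one y]

lemma abs_tanh_sub_le (x y : ℝ) : |Real.tanh x - Real.tanh y| ≤ |x - y| := by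
  have h := Convex.norm_image_sub_le_of_norm_hasDerivWithin_le (f := Real.tanh) (s := Set.univ)
    (f' := fun y => 1 - Real.tanh y ^ 2) (C := 1) (x := y) (y := x)
    (fun z _ => (hasDerivAt_tanh' z).hasDerivWithinAt)
    (fun z _ => by
      rw [Real.norm_eq_abs, abs_le]
      constructor <;> nlinarith [Real.tanh_sq_lt_one z, sq_nonneg (Real.tanh z)])
    convex_univ (Set.mem_univ _) (Set.mem_univ _)
  simpa [Real.norm_eq_abs] using h

/-- Lower bound on increments of `tanh`, from
`tanh y - tanh x = sinh (y - x) / (cosh x * cosh y)`. -/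
lemma mul_sub_le_tanh_sub {x y : ℝ} (hx : 0 ≤ x) (hxy : x ≤ y) :
    (1 - Real.tanh y ^ 2) * (y - x) ≤ Real.tanh y - Real.tanh x := by
  have hcx := Real.cosh_pos x
  have hcy := Real.cosh_pos y
  have hle : Real.cosh x ≤ Real.cosh y := by
    rw [Real.cosh_le_cosh, abs_of_nonneg hx, abs_of_nonneg (hx.trans hxy)]; exact hxy
  have hs : y - x ≤ Real.sinh (y - x) := Real.self_le_sinh_iff.2 (sub_nonneg.2 hxy)
  have e1 : 1 - Real.tanh y ^ 2 = 1 / Real.cosh y ^ 2 := by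
    rw [Real.tanh_eq_sinh_div_cosh]
    field_simp
    linarith [Real.cosh_sq y]
  have e2 : Real.tanh y - Real.tanh x = Real.sinh (y - x) / (Real.cosh x * Real.cosh y) := by
    rw [Real.tanh_eq_sinh_div_cosh, Real.tanh_eq_sinh_div_cosh, Real.sinh_sub]
    field_simp
  rw [e1, e2, one_div_mul_eq_div]
  have : (0:ℝ) ≤ y - x := sub_nonneg.2 hxy
  gcongr
  nlinarith

/-- If `f` vanishes at `y₀` and its derivative is `O(|y - y₀| ^ n)`, then `f` is
`O(|y - y₀| ^ (n + 1))`, with the same constant. -/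
lemma abs_le_pow_succ_of_deriv {f f' : ℝ → ℝ} {y₀ C : ℝ} {n : ℕ} (hC : 0 ≤ C)
    (hf : ∀ y, HasDerivAt f (f' y) y) (h0 : f y₀ = 0)
    (hb : ∀ y, |f' y| ≤ C * |y - y₀| ^ n) (y : ℝ) : |f y| ≤ C * |y - y₀| ^ (n + 1) := by
  have h := Convex.norm_image_sub_le_of_norm_hasDerivWithin_le (f := f) (s := Set.uIcc y₀ y)
    (f' := f') (C := C * |y - y₀| ^ n) (x := y₀) (y := y)
    (fun z _ => (hf z).hasDerivWithinAt)
    (fun z hz => by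
      rw [Real.norm_eq_abs]
      refine (hb z).trans ?_
      have := Set.abs_sub_left_of_mem_uIcc hz
      gcongr)
    (convex_uIcc _ _) Set.left_mem_uIcc Set.right_mem_uIcc
  rw [h0, sub_zero, Real.norm_eq_abs, Real.norm_eq_abs] at h
  rw [pow_succ, ← mul_assoc]; exact h

/-! ### The rate function of the mixing variable -/

/-- The (unnormalised) exponential rate of the Hubbard–Stratonovich mixing density: the
Curie–Weiss weight is a mixture of product measures of mean `tanh y` with density proportional
to `exp (-N * phi β y)`. -/
noncomputable def phi (β y : ℝ) : ℝ := y ^ 2 / (2 * β) - Real.log (Real.cosh y)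

lemma phi_neg (β y : ℝ) : phi β (-y) = phi β y := by simp [phi]

lemma hasDerivAt_phi {β : ℝ} (hβ : 0 < β) (y : ℝ) :
    HasDerivAt (phi β) (y / β - Real.tanh y) y := by
  have h1 : HasDerivAt (fun y : ℝ => y ^ 2 / (2 * β)) (y / β) y := by
    have := (hasDerivAt_pow 2 y).div_const (2 * β)
    refine this.congr_deriv ?_
    push_cast
    field_simp
  have h2 := (Real.hasDerivAt_cosh y).log (Real.cosh_pos y).ne'
  rw [Real.tanh_eq_sinh_div_cosh]
  exact h1.sub h2

lemma hasDerivAt_phi' {β : ℝ} (y : ℝ) :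
    HasDerivAt (fun y => y / β - Real.tanh y) (1 / β - (1 - Real.tanh y ^ 2)) y :=
  ((hasDerivAt_id y).div_const β).sub (hasDerivAt_tanh' y)

lemma continuous_phi {β : ℝ} (hβ : 0 < β) : Continuous (phi β) :=
  continuous_iff_continuousAt.2 fun y => (hasDerivAt_phi hβ y).continuousAt

/-- The curvature `1 / β - (1 - m²)` of the rate function at `β m` is positive:
`β (1 - m²) = 2 y / sinh (2 y) < 1` at `y = β m`. -/
lemma beta_mul_lt_one {β m : ℝ} (hβ : 0 < β) (hm : 0 < m) (hsol : m = Real.tanh (β * m)) :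
    β * (1 - m ^ 2) < 1 := by
  set y := β * m with hy
  have hy0 : 0 < y := by positivity
  have hc := Real.cosh_pos y
  have hs : 0 < Real.sinh y := Real.sinh_pos_iff.2 hy0
  have h2 : 2 * y < Real.sinh (2 * y) := Real.self_lt_sinh_iff.2 (by positivity)
  rw [Real.sinh_two_mul] at h2
  have hm' : m = Real.sinh y / Real.cosh y := by rw [← Real.tanh_eq_sinh_div_cosh]; exact hsol
  have hβ' : β = y * Real.cosh y / Real.sinh y := by
    rw [hm'] at hy
    field_simp at hy ⊢
    linarith
  have ha : 1 - m ^ 2 = 1 / Real.cosh y ^ 2 := by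
    rw [hm']; field_simp; linarith [Real.cosh_sq y]
  rw [ha, hβ']
  have : y * Real.cosh y / Real.sinh y * (1 / Real.cosh y ^ 2)
      = y / (Real.sinh y * Real.cosh y) := by field_simp
  rw [this, div_lt_one (by positivity)]
  linarith

/-- Third-order comparison of the rate function with `κ (tanh y - m)²`, whose Hessian at the
minimum agrees with that of `phi β`. -/
lemma phi_cubic {β m κ : ℝ} (hβ : 1 < β) (hm0 : 0 < m) (hm1 : m < 1)
    (hsol : m = Real.tanh (β * m))
    (hκ : 2 * κ * (1 - m ^ 2) ^ 2 = 1 / β - (1 - m ^ 2)) :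
    ∃ C, 0 ≤ C ∧ ∀ y, |phi β y - phi β (β * m) - κ * (Real.tanh y - m) ^ 2|
      ≤ C * |y - β * m| ^ 3 := by
  have hβ0 : 0 < β := by linarith
  set C : ℝ := 2 + 2 * |κ| * 6 with hC
  have hC0 : 0 ≤ C := by positivity
  refine ⟨C, hC0, ?_⟩
  have d0 : ∀ y, HasDerivAt (fun y => phi β y - phi β (β * m) - κ * (Real.tanh y - m) ^ 2)
      (y / β - Real.tanh y - 2 * κ * ((Real.tanh y - m) * (1 - Real.tanh y ^ 2))) y := by
    intro y
    have h := ((hasDerivAt_phi hβ0 y).sub_const (phi β (β * m))).sub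
      ((((hasDerivAt_tanh' y).sub_const m).pow 2).const_mul κ)
    refine HasDerivAt.congr_deriv h ?_
    simp; ring
  have d1 : ∀ y, HasDerivAt
      (fun y => y / β - Real.tanh y - 2 * κ * ((Real.tanh y - m) * (1 - Real.tanh y ^ 2)))
      (1 / β - (1 - Real.tanh y ^ 2) - 2 * κ * ((1 - Real.tanh y ^ 2) * (1 - Real.tanh y ^ 2)
        + (Real.tanh y - m) * (-(2 * Real.tanh y * (1 - Real.tanh y ^ 2))))) y := by
    intro y
    have ht := hasDerivAt_tanh' y
    have h := (hasDerivAt_phi' (β := β) y).sub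
      (((ht.sub_const m).mul ((ht.pow 2).const_sub 1)).const_mul (2 * κ))
    refine HasDerivAt.congr_deriv h ?_
    simp
  have b : ∀ y, |1 / β - (1 - Real.tanh y ^ 2) - 2 * κ * ((1 - Real.tanh y ^ 2) *
      (1 - Real.tanh y ^ 2) + (Real.tanh y - m) * (-(2 * Real.tanh y * (1 - Real.tanh y ^ 2))))|
      ≤ C * |y - β * m| ^ 1 := by
    intro y
    have hl := abs_tanh_sub_le y (β * m)
    rw [← hsol] at hl
    set T := Real.tanh y with hT
    have hT1 : |T| < 1 := Real.abs_tanh_lt_one y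
    have hT2 : |1 - T ^ 2| ≤ 1 := by
      rw [abs_le]; constructor <;> nlinarith [Real.tanh_sq_lt_one y, sq_nonneg T]
    -- the second derivative is a polynomial in `T` vanishing at `T = m`
    have e : 1 / β - (1 - T ^ 2) - 2 * κ * ((1 - T ^ 2) * (1 - T ^ 2)
        + (T - m) * (-(2 * T * (1 - T ^ 2))))
        = (T - m) * ((T + m) + 2 * κ * ((T + m) * ((1 - T ^ 2) + (1 - m ^ 2))
          + 2 * T * (1 - T ^ 2))) := by
      linear_combination -hκ
    have hm2 : |1 - m ^ 2| ≤ 1 := by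
      rw [abs_le]; constructor <;> nlinarith
    have hTm : |T + m| ≤ 2 := (abs_add_le _ _).trans (by rw [abs_of_pos hm0]; linarith)
    rw [e, abs_mul, pow_one, mul_comm C]
    gcongr
    calc |(T + m) + 2 * κ * ((T + m) * ((1 - T ^ 2) + (1 - m ^ 2)) + 2 * T * (1 - T ^ 2))|
        ≤ |T + m| + 2 * |κ| * (|T + m| * (|1 - T ^ 2| + |1 - m ^ 2|)
            + 2 * |T| * |1 - T ^ 2|) := by
          refine (abs_add_le _ _).trans ?_
          rw [abs_mul, abs_mul 2 κ, abs_two]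
          gcongr
          refine (abs_add_le _ _).trans ?_
          rw [abs_mul, abs_mul, abs_mul 2 T, abs_two]
          gcongr
          exact abs_add_le _ _
      _ ≤ 2 + 2 * |κ| * (2 * (1 + 1) + 2 * 1 * 1) := by gcongr
      _ = C := by rw [hC]; ring
  have s1 := abs_le_pow_succ_of_deriv (n := 1) (y₀ := β * m) hC0 d1 (by
    rw [← hsol]; field_simp; ring) b
  exact abs_le_pow_succ_of_deriv (n := 2) (y₀ := β * m) hC0 d0 (by rw [← hsol]; ring) s1

/-- On `[β m, ∞)` the rate function is strongly convex. -/
lemma phi_lower_right {β m : ℝ} (hβ : 1 < β) (hm0 : 0 < m)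
    (hsol : m = Real.tanh (β * m)) {y : ℝ} (hy : β * m ≤ y) :
    (1 / β - (1 - m ^ 2)) / 2 * (y - β * m) ^ 2 ≤ phi β y - phi β (β * m) := by
  have hβ0 : 0 < β := by linarith
  set k := 1 / β - (1 - m ^ 2) with hk
  have m1 : MonotoneOn (fun y => y / β - Real.tanh y - k * (y - β * m)) (Set.Ici (β * m)) := by
    refine monotoneOn_of_hasDerivWithinAt_nonneg (convex_Ici _)
      (f' := fun y => 1 / β - (1 - Real.tanh y ^ 2) - k * 1) ?_ ?_ ?_
    · have := continuous_tanh'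
      fun_prop
    · intro x _
      exact ((hasDerivAt_phi' x).sub
        (((hasDerivAt_id x).sub_const _).const_mul k)).hasDerivWithinAt
    · intro x hx
      rw [interior_Ici] at hx
      have : m ≤ Real.tanh x := by
        rw [hsol]; exact strictMono_tanh'.monotone (le_of_lt hx)
      rw [hk]; nlinarith
  have m2 : MonotoneOn (fun y => phi β y - phi β (β * m) - k / 2 * (y - β * m) ^ 2)
      (Set.Ici (β * m)) := by
    refine monotoneOn_of_hasDerivWithinAt_nonneg (convex_Ici _)
      (f' := fun y => y / β - Real.tanh y - k * (y - β * m)) ?_ ?_ ?_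
    · have := continuous_phi hβ0
      fun_prop
    · intro x _
      have h := ((hasDerivAt_phi hβ0 x).sub_const (phi β (β * m))).sub
        ((((hasDerivAt_id x).sub_const (β * m)).pow 2).const_mul (k / 2))
      refine HasDerivAt.hasDerivWithinAt ?_
      refine HasDerivAt.congr_deriv h ?_
      simp; ring
    · intro x hx
      rw [interior_Ici] at hx
      have := m1 (Set.self_mem_Ici) (Set.mem_Ici.2 (le_of_lt hx)) (le_of_lt hx)
      simp only [← hsol] at this
      refine le_trans (le_of_eq ?_) this
      field_simp; ring
  have := m2 (Set.self_mem_Ici) hy hy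
  simp only at this
  linarith

/-- On `[0, β m]` the rate function decreases: its derivative is convex and vanishes at both
endpoints. -/
lemma phi_antitone {β m : ℝ} (hβ : 1 < β) (hm0 : 0 < m) (hsol : m = Real.tanh (β * m)) :
    AntitoneOn (phi β) (Set.Icc 0 (β * m)) := by
  have hβ0 : 0 < β := by linarith
  have hc : ConvexOn ℝ (Set.Icc 0 (β * m)) (fun y => y / β - Real.tanh y) := by
    refine MonotoneOn.convexOn_of_deriv (convex_Icc _ _) ?_ ?_ ?_
    · have := continuous_tanh'
      fun_prop
    · exact fun x _ => (hasDerivAt_phi' x).differentiableAt.differentiableWithinAt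
    · intro x hx y hy hxy
      rw [interior_Icc] at hx hy
      rw [(hasDerivAt_phi' x).deriv, (hasDerivAt_phi' y).deriv]
      have h1 := strictMono_tanh'.monotone hxy
      have h2 : 0 ≤ Real.tanh x := by
        rw [← Real.tanh_zero]; exact strictMono_tanh'.monotone hx.1.le
      nlinarith
  refine antitoneOn_of_hasDerivWithinAt_nonpos (convex_Icc _ _)
    (continuous_phi hβ0).continuousOn (fun x _ => (hasDerivAt_phi hβ0 x).hasDerivWithinAt) ?_
  intro x hx
  have hpos : 0 ≤ β * m := by positivity
  have := hc.le_max_of_mem_Icc (Set.left_mem_Icc.2 hpos) (Set.right_mem_Icc.2 hpos)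
    (interior_subset hx)
  rw [← hsol] at this
  refine this.trans ?_
  have : β * m / β - m = 0 := by field_simp; ring
  simp [this]

/-- Global quadratic lower bound on the half-line, and a local quadratic upper bound. -/
lemma phi_quadratic {β m : ℝ} (hβ : 1 < β) (hm0 : 0 < m) (hm1 : m < 1)
    (hsol : m = Real.tanh (β * m)) :
    ∃ c, 0 < c ∧ (∀ y, 0 ≤ y → c * (y - β * m) ^ 2 ≤ phi β y - phi β (β * m)) ∧
      ∃ C, 0 ≤ C ∧ ∀ y, |y - β * m| ≤ 1 → phi β y - phi β (β * m) ≤ C * (y - β * m) ^ 2 := by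
  have hβ0 : 0 < β := by linarith
  have ha0 : 0 < 1 - m ^ 2 := by nlinarith
  have hβa := beta_mul_lt_one hβ0 hm0 hsol
  set k := 1 / β - (1 - m ^ 2) with hk
  have hk0 : 0 < k := by
    rw [hk, sub_pos, lt_div_iff₀ hβ0]; linarith
  set y₀ := β * m with hy₀
  have hy₀pos : 0 < y₀ := by positivity
  have cub : ∀ y, |phi β y - phi β y₀ - k / 2 * (y - y₀) ^ 2| ≤ 2 * |y - y₀| ^ 3 := by
    have d0 : ∀ y, HasDerivAt (fun y => phi β y - phi β y₀ - k / 2 * (y - y₀) ^ 2)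
        (y / β - Real.tanh y - k * (y - y₀)) y := by
      intro y
      have h := ((hasDerivAt_phi hβ0 y).sub_const (phi β y₀)).sub
        ((((hasDerivAt_id y).sub_const y₀).pow 2).const_mul (k / 2))
      refine HasDerivAt.congr_deriv h ?_
      simp; ring
    have d1 : ∀ y, HasDerivAt (fun y => y / β - Real.tanh y - k * (y - y₀))
        (1 / β - (1 - Real.tanh y ^ 2) - k * 1) y := fun y =>
      (hasDerivAt_phi' y).sub (((hasDerivAt_id y).sub_const _).const_mul k)
    have s1 := abs_le_pow_succ_of_deriv (n := 1) (y₀ := y₀) (C := 2) (by norm_num) d1 (by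
      rw [← hsol]; rw [hy₀]; field_simp; ring) (fun y => by
        have hl := abs_tanh_sub_le y y₀
        rw [← hsol] at hl
        have e : 1 / β - (1 - Real.tanh y ^ 2) - k * 1
            = (Real.tanh y + m) * (Real.tanh y - m) := by rw [hk]; ring
        rw [e, abs_mul, pow_one]
        gcongr
        refine (abs_add_le _ _).trans ?_
        rw [abs_of_pos hm0]; linarith [Real.abs_tanh_lt_one y])
    exact abs_le_pow_succ_of_deriv (n := 2) (y₀ := y₀) (by norm_num) d0 (by simp) s1
  -- inside this radius the cubic error is dominated by half of the quadratic term
  set ρ := min (k / 8) y₀ with hρ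
  have hρ0 : 0 < ρ := lt_min (by positivity) hy₀pos
  have loc : ∀ y, |y - y₀| ≤ ρ → k / 4 * (y - y₀) ^ 2 ≤ phi β y - phi β y₀ := by
    intro y hy
    have h1 := (abs_le.1 (cub y)).1
    have h2 : |y - y₀| ^ 3 = |y - y₀| * (y - y₀) ^ 2 := by rw [pow_succ', sq_abs]
    have h3 : |y - y₀| * (y - y₀) ^ 2 ≤ k / 8 * (y - y₀) ^ 2 :=
      mul_le_mul_of_nonneg_right (hy.trans (min_le_left _ _)) (sq_nonneg _)
    rw [h2] at h1
    linarith
  refine ⟨k / 4 * (ρ / y₀) ^ 2, by positivity, ?_, k / 2 + 2, by positivity, ?_⟩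
  · have hq : (ρ / y₀) ^ 2 ≤ 1 :=
      pow_le_one₀ (by positivity) ((div_le_one hy₀pos).2 (min_le_right _ _))
    have hq' : k / 4 * (ρ / y₀) ^ 2 ≤ k / 4 := by nlinarith
    intro y hy
    rcases le_total y₀ y with h | h
    · have := phi_lower_right hβ hm0 hsol h
      refine le_trans ?_ this
      gcongr
      linarith
    · rcases le_total (y₀ - ρ) y with h' | h'
      · refine le_trans ?_ (loc y ?_)
        · gcongr
        · rw [abs_le]; constructor <;> linarith
      · have h1 := loc (y₀ - ρ) (by rw [sub_sub_cancel_left, abs_neg, abs_of_pos hρ0])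
        have h2 := phi_antitone hβ hm0 hsol ⟨hy, h⟩
          ⟨sub_nonneg.2 (min_le_right _ _), by linarith⟩ h'
        have h3 : (y - y₀) ^ 2 ≤ y₀ ^ 2 := by nlinarith
        calc k / 4 * (ρ / y₀) ^ 2 * (y - y₀) ^ 2 ≤ k / 4 * (ρ / y₀) ^ 2 * y₀ ^ 2 := by gcongr
          _ = k / 4 * (y₀ - ρ - y₀) ^ 2 := by field_simp; ring
          _ ≤ _ := by linarith
  · intro y hy
    have h1 := (abs_le.1 (cub y)).2
    have h2 : |y - y₀| ^ 3 = |y - y₀| * (y - y₀) ^ 2 := by rw [pow_succ', sq_abs]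
    have h3 : |y - y₀| * (y - y₀) ^ 2 ≤ 1 * (y - y₀) ^ 2 :=
      mul_le_mul_of_nonneg_right hy (sq_nonneg _)
    rw [h2] at h1
    linarith

/-! ### Relative entropy from one-sided comparison -/

lemma relEnt_nonneg {α : Type*} [Fintype α] {ρ η : α → ℝ} (hρ : ∀ x, 0 < ρ x)
    (hη : ∀ x, 0 < η x) (sρ : ∑ x, ρ x = 1) (sη : ∑ x, η x = 1) : 0 ≤ relEnt ρ η := by
  have h : ∀ x, ρ x - η x ≤ ρ x * Real.log (ρ x / η x) := by
    intro x
    have h1 := Real.one_sub_inv_le_log_of_pos (div_pos (hρ x) (hη x))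
    have h2 : ρ x * (1 - (ρ x / η x)⁻¹) = ρ x - η x := by
      have := (hρ x).ne'
      field_simp
    rw [← h2]
    exact mul_le_mul_of_nonneg_left h1 (hρ x).le
  have := Finset.sum_le_sum fun x (_ : x ∈ Finset.univ) => h x
  rw [Finset.sum_sub_distrib, sρ, sη, sub_self] at this
  exact this

/-- If `ρ` is at most `c η` up to an error `b` of total mass at most `B`, then
`H(ρ | η) ≤ log c + c B + B (1 + M)`, where `exp (-M)` bounds the atoms of `η` from below. -/
lemma relEnt_le {α : Type*} [Fintype α] {ρ η b : α → ℝ} {c B M : ℝ} (hc : 1 ≤ c)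
    (hB1 : B ≤ 1) (hM : 0 ≤ M) (hρ : ∀ x, 0 < ρ x)
    (sρ : ∑ x, ρ x = 1) (hb : ∀ x, 0 ≤ b x) (sb : ∑ x, b x ≤ B)
    (hle : ∀ x, ρ x ≤ c * η x + b x) (hlow : ∀ x, Real.exp (-M) ≤ η x) :
    relEnt ρ η ≤ Real.log c + c * B + B * (1 + M) := by
  have hc0 : 0 < c := by linarith
  have key : ∀ x, ρ x * Real.log (ρ x / η x) ≤ ρ x * Real.log c + c * b x + b x * (1 + M) := by
    intro x
    have hη : 0 < η x := (Real.exp_pos _).trans_le (hlow x)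
    have hbx := hb x
    have hb1 : b x ≤ 1 :=
      (Finset.single_le_sum (fun i _ => hb i) (Finset.mem_univ x)).trans (sb.trans hB1)
    have hq : 0 ≤ b x / η x := by positivity
    have l1 : Real.log (ρ x / η x) ≤ Real.log c + Real.log (1 + b x / η x) := by
      rw [← Real.log_mul hc0.ne' (by positivity)]
      refine Real.log_le_log (div_pos (hρ x) hη) ?_
      rw [div_le_iff₀ hη]
      have : c * (1 + b x / η x) * η x = c * η x + c * b x := by field_simp
      rw [this]
      nlinarith [hle x]
    have l2 : 0 ≤ Real.log (1 + b x / η x) := Real.log_nonneg (by linarith)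
    have l3 : Real.log (1 + b x / η x) ≤ b x / η x := by
      have := Real.log_le_sub_one_of_pos (show 0 < 1 + b x / η x by positivity)
      linarith
    have l4 : Real.log (1 + b x / η x) ≤ 1 + M := by
      have e1 : 1 + b x / η x ≤ 2 * Real.exp M := by
        have h1 : b x / η x ≤ Real.exp M := by
          rw [div_le_iff₀ hη]
          calc b x ≤ 1 := hb1
            _ = Real.exp M * Real.exp (-M) := by rw [← Real.exp_add]; simp
            _ ≤ _ := by gcongr; exact hlow x
        have h2 : 1 ≤ Real.exp M := Real.one_le_exp hM
        linarith
      refine (Real.log_le_log (by positivity) e1).trans ?_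
      rw [Real.log_mul (by norm_num) (Real.exp_pos _).ne', Real.log_exp]
      linarith [Real.log_two_lt_d9]
    calc ρ x * Real.log (ρ x / η x)
        ≤ ρ x * (Real.log c + Real.log (1 + b x / η x)) :=
          mul_le_mul_of_nonneg_left l1 (hρ x).le
      _ = ρ x * Real.log c + ρ x * Real.log (1 + b x / η x) := by ring
      _ ≤ ρ x * Real.log c + (c * η x + b x) * Real.log (1 + b x / η x) := by
          gcongr; exact hle x
      _ = ρ x * Real.log c + c * η x * Real.log (1 + b x / η x)
            + b x * Real.log (1 + b x / η x) := by ring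
      _ ≤ ρ x * Real.log c + c * η x * (b x / η x) + b x * (1 + M) := by gcongr
      _ = _ := by field_simp
  have := Finset.sum_le_sum fun x (_ : x ∈ Finset.univ) => key x
  rw [Finset.sum_add_distrib, Finset.sum_add_distrib, ← Finset.sum_mul, ← Finset.mul_sum,
    ← Finset.sum_mul, sρ, one_mul] at this
  refine this.trans ?_
  gcongr

/-- Asymptotic form of `relEnt_le`. -/
lemma tendsto_relEnt {α : ℕ → Type*} [∀ N, Fintype (α N)] {ρ η : ∀ N, α N → ℝ}
    {c B : ℕ → ℝ} {M : ℝ} (hM : 0 ≤ M) (hc : Tendsto c atTop (nhds 1))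
    (hB : Tendsto B atTop (nhds 0))
    (hNB : Tendsto (fun N : ℕ => (N : ℝ) * B N) atTop (nhds 0))
    (hev : ∀ᶠ N : ℕ in atTop, (∀ x, 0 < ρ N x) ∧ ∑ x, ρ N x = 1 ∧ ∑ x, η N x = 1 ∧
      (∀ x, Real.exp (-(M * N)) ≤ η N x) ∧ 1 ≤ c N ∧
      ∃ b : α N → ℝ, (∀ x, 0 ≤ b x) ∧ ∑ x, b x ≤ B N ∧ ∀ x, ρ N x ≤ c N * η N x + b x) :
    Tendsto (fun N => relEnt (ρ N) (η N)) atTop (nhds 0) := by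
  have hlim : Tendsto (fun N : ℕ => Real.log (c N) + c N * B N + B N + M * (N * B N)) atTop
      (nhds 0) := by
    have h1 : Tendsto (fun N => Real.log (c N)) atTop (nhds 0) := by
      have := hc.log one_ne_zero
      rwa [Real.log_one] at this
    have := ((h1.add (hc.mul hB)).add hB).add (hNB.const_mul M)
    simpa using this
  refine tendsto_of_tendsto_of_tendsto_of_le_of_le' tendsto_const_nhds hlim ?_ ?_
  · filter_upwards [hev] with N h
    obtain ⟨h1, h2, h3, h4, -, -⟩ := h
    exact relEnt_nonneg h1 (fun x => (Real.exp_pos _).trans_le (h4 x)) h2 h3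
  · filter_upwards [hev, hB.eventually_le_const one_pos] with N h hB1
    obtain ⟨h1, h2, h3, h4, h5, b, hb, sb, hle⟩ := h
    refine (relEnt_le h5 hB1 (by positivity) h1 h2 hb sb hle h4).trans (le_of_eq ?_)
    ring

/-! ### Comparing two mixtures of the same kernel -/

/-- Two probability mass functions on `Ω` obtained by mixing the same kernel `q`, one against
the density `A w` on the half-line, the other against `n` on a core `S` plus a remainder `a`.
If the densities are proportional on `S` up to a factor `c ^ {±1}`, then each mass function is
bounded by nearly the other one plus the part not carried by the core; the proportionality
constant is controlled by comparing total masses. -/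
lemma mixture_compare {Ω : Type*} [Fintype Ω] {q : ℝ → Ω → ℝ} {w n : ℝ → ℝ} {S : Set ℝ}
    (hS : MeasurableSet S) (hSpos : S ⊆ Set.Ioi 0)
    (hqc : ∀ x, Continuous fun y => q y x) (hq0 : ∀ y x, 0 ≤ q y x) (hq1 : ∀ y, ∑ x, q y x = 1)
    (hw0 : ∀ y, 0 ≤ w y) (hwi : IntegrableOn w (Set.Ioi 0))
    (hni : IntegrableOn n S)
    {A K c α B : ℝ} (hA : 0 < A) (hK : 0 < K) (hc : 0 < c) (hα : α < 1) (hB : B < 1)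
    (hwn : ∀ y ∈ S, w y ≤ K * c * n y) (hnw : ∀ y ∈ S, n y ≤ c / K * w y)
    {μ ν a : Ω → ℝ} (hμ : ∀ x, μ x = A * ∫ y in Set.Ioi 0, w y * q y x)
    (hν : ∀ x, ν x = (∫ y in S, n y * q y x) + a x)
    (sμ : ∑ x, μ x = 1) (sν : ∑ x, ν x = 1) (ha : ∀ x, 0 ≤ a x) (sa : ∑ x, a x ≤ α)
    (hBS : A * ∫ y in Set.Ioi 0 \ S, w y ≤ B) :
    (∃ b : Ω → ℝ, (∀ x, 0 ≤ b x) ∧ ∑ x, b x ≤ B ∧ ∀ x, μ x ≤ c ^ 2 / (1 - α) * ν x + b x) ∧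
      ∀ x, ν x ≤ c ^ 2 / (1 - B) * μ x + a x := by
  have hqle : ∀ y x, q y x ≤ 1 := fun y x => by
    rw [← hq1 y]; exact Finset.single_le_sum (fun i _ => hq0 y i) (Finset.mem_univ x)
  have int_mul : ∀ {f : ℝ → ℝ} {U : Set ℝ}, IntegrableOn f U → ∀ x,
      IntegrableOn (fun y => f y * q y x) U := by
    intro f U hf x
    refine Integrable.mul_bdd (c := 1) hf (hqc x).aestronglyMeasurable ?_
    exact Eventually.of_forall fun y => by
      rw [Real.norm_eq_abs, abs_of_nonneg (hq0 y x)]; exact hqle y x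
  have hwS : IntegrableOn w S := hwi.mono_set hSpos
  have hwR : IntegrableOn w (Set.Ioi 0 \ S) := hwi.mono_set Set.sdiff_subset
  set b : Ω → ℝ := fun x => A * ∫ y in Set.Ioi 0 \ S, w y * q y x with hb
  have hb0 : ∀ x, 0 ≤ b x := fun x =>
    mul_nonneg hA.le (integral_nonneg fun y => mul_nonneg (hw0 y) (hq0 y x))
  have sb : ∑ x, b x ≤ B := by
    rw [hb, ← Finset.mul_sum, ← integral_finsetSum _ fun x _ => int_mul hwR x]
    simp_rw [← Finset.mul_sum, hq1, mul_one]
    exact hBS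
  have hsplit : ∀ x, μ x = A * (∫ y in S, w y * q y x) + b x := by
    intro x
    have h := integral_inter_add_sdiff hS (int_mul hwi x)
    rw [Set.inter_eq_self_of_subset_right hSpos] at h
    rw [hμ, hb, ← mul_add, h]
  have up : ∀ x, ∫ y in S, w y * q y x ≤ K * c * ∫ y in S, n y * q y x := by
    intro x
    rw [← integral_const_mul]
    refine setIntegral_mono_on (int_mul hwS x) ((int_mul hni x).const_mul _) hS fun y hy => ?_
    rw [← mul_assoc]
    exact mul_le_mul_of_nonneg_right (hwn y hy) (hq0 y x)
  have dn : ∀ x, ∫ y in S, n y * q y x ≤ c / K * ∫ y in S, w y * q y x := by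
    intro x
    rw [← integral_const_mul]
    refine setIntegral_mono_on (int_mul hni x) ((int_mul hwS x).const_mul _) hS fun y hy => ?_
    rw [← mul_assoc]
    exact mul_le_mul_of_nonneg_right (hnw y hy) (hq0 y x)
  have h1 : ∀ x, μ x ≤ A * K * c * ν x + b x := by
    intro x
    have : A * ∫ y in S, w y * q y x ≤ A * (K * c * ν x) := by
      gcongr
      refine (up x).trans ?_
      gcongr
      rw [hν]; linarith [ha x]
    rw [hsplit x]; linarith
  have h2 : ∀ x, ν x ≤ c / (A * K) * μ x + a x := by
    intro x
    have e : c / (A * K) * (A * ∫ y in S, w y * q y x) = c / K * ∫ y in S, w y * q y x := by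
      field_simp
    have : c / (A * K) * (A * ∫ y in S, w y * q y x) ≤ c / (A * K) * μ x := by
      gcongr
      rw [hsplit x]; linarith [hb0 x]
    rw [e] at this
    rw [hν x]; linarith [dn x]
  have hμ0 : ∀ x, 0 ≤ μ x := fun x => by
    rw [hμ]
    exact mul_nonneg hA.le (integral_nonneg fun y => mul_nonneg (hw0 y) (hq0 y x))
  have s1 : 1 ≤ A * K * c + B := by
    have := Finset.sum_le_sum fun x (_ : x ∈ Finset.univ) => h1 x
    rw [Finset.sum_add_distrib, ← Finset.mul_sum, sμ, sν] at this
    linarith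
  have s2 : 1 ≤ c / (A * K) + α := by
    have := Finset.sum_le_sum fun x (_ : x ∈ Finset.univ) => h2 x
    rw [Finset.sum_add_distrib, ← Finset.mul_sum, sμ, sν] at this
    linarith
  have hα' : 0 < 1 - α := by linarith
  have hB' : 0 < 1 - B := by linarith
  have k1 : A * K * c ≤ c ^ 2 / (1 - α) := by
    have h : 1 - α ≤ c / (A * K) := by linarith
    rw [le_div_iff₀ (by positivity)] at h ⊢
    nlinarith
  have k2 : c / (A * K) ≤ c ^ 2 / (1 - B) := by
    rw [div_le_div_iff₀ (by positivity) hB']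
    nlinarith
  have hν0 : ∀ x, 0 ≤ ν x := fun x => by
    rw [hν]
    refine add_nonneg (setIntegral_nonneg hS fun y hy => mul_nonneg ?_ (hq0 y x)) (ha x)
    have h := (hw0 y).trans (hwn y hy)
    exact nonneg_of_mul_nonneg_right h (by positivity)
  refine ⟨⟨b, hb0, sb, fun x => (h1 x).trans ?_⟩, fun x => (h2 x).trans ?_⟩
  · have := hν0 x
    gcongr
  · have := hμ0 x
    gcongr

/-! ### Product measures and their symmetrisation -/

/-- The spin `±1` encoded by a Boolean. -/
noncomputable def spinVal (b : Bool) : ℝ := if b then 1 else -1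

/-- The product measure on `{±1}^N` whose spins have mean `θ`. -/
noncomputable def prodW {N : ℕ} (θ : ℝ) (σ : Fin N → Bool) : ℝ :=
  ∏ i, (1 + spinVal (σ i) * θ) / 2

/-- The even mixture of the product measures of means `θ` and `-θ`. -/
noncomputable def symW {N : ℕ} (θ : ℝ) (σ : Fin N → Bool) : ℝ :=
  (prodW θ σ + prodW (-θ) σ) / 2

lemma sum_prodW {N : ℕ} (θ : ℝ) : ∑ σ : Fin N → Bool, prodW θ σ = 1 := by
  unfold prodW
  rw [← Fintype.prod_sum (fun (_ : Fin N) b => (1 + spinVal b * θ) / 2)]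
  refine Finset.prod_eq_one fun i _ => ?_
  simp [spinVal]
  ring

lemma sum_symW {N : ℕ} (θ : ℝ) : ∑ σ : Fin N → Bool, symW θ σ = 1 := by
  unfold symW
  rw [← Finset.sum_div, Finset.sum_add_distrib, sum_prodW, sum_prodW]
  norm_num

lemma continuous_prodW {N : ℕ} (σ : Fin N → Bool) : Continuous fun θ => prodW θ σ := by
  unfold prodW
  fun_prop

lemma continuous_symW {N : ℕ} (σ : Fin N → Bool) : Continuous fun θ => symW θ σ := by
  unfold symW
  have := continuous_prodW σ
  fun_prop

lemma pow_le_prodW {N : ℕ} {θ q : ℝ} (hq : 0 ≤ q) (h : |θ| ≤ 1 - 2 * q) (σ : Fin N → Bool) :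
    q ^ N ≤ prodW θ σ := by
  unfold prodW
  have e : q ^ N = ∏ _i : Fin N, q := by simp
  rw [e]
  refine Finset.prod_le_prod (fun _ _ => hq) fun i _ => ?_
  have := abs_le.1 h
  unfold spinVal
  split_ifs <;> linarith

lemma pow_le_symW {N : ℕ} {θ q : ℝ} (hq : 0 ≤ q) (h : |θ| ≤ 1 - 2 * q) (σ : Fin N → Bool) :
    q ^ N ≤ symW θ σ := by
  have h1 := pow_le_prodW hq h σ
  have h2 := pow_le_prodW (θ := -θ) hq (by rwa [abs_neg]) σ
  unfold symW
  linarith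

lemma symW_nonneg {N : ℕ} {θ : ℝ} (h : |θ| ≤ 1) (σ : Fin N → Bool) : 0 ≤ symW θ σ := by
  have h1 : ∀ θ : ℝ, |θ| ≤ 1 → 0 ≤ prodW θ σ := fun θ h => by
    unfold prodW
    refine Finset.prod_nonneg fun i _ => ?_
    have := abs_le.1 h
    unfold spinVal
    split_ifs <;> linarith
  have h2 := h1 θ h
  have h3 := h1 (-θ) (by rwa [abs_neg])
  unfold symW
  linarith

/-- Exponential tilting of fair coins gives the product measure of mean `tanh y`. -/
lemma cosh_pow_mul_prodW {N : ℕ} (y : ℝ) (σ : Fin N → Bool) :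
    Real.cosh y ^ N * prodW (Real.tanh y) σ
      = Real.exp (y * ∑ i, spinVal (σ i)) / 2 ^ N := by
  have e1 : Real.cosh y ^ N = ∏ _i : Fin N, Real.cosh y := by simp
  have e2 : (2 : ℝ) ^ N = ∏ _i : Fin N, (2 : ℝ) := by simp
  rw [Finset.mul_sum, Real.exp_sum, e1, e2, prodW, ← Finset.prod_mul_distrib,
    ← Finset.prod_div_distrib]
  refine Finset.prod_congr rfl fun i _ => ?_
  have hc := (Real.cosh_pos y).ne'
  rw [Real.tanh_eq_sinh_div_cosh]
  unfold spinVal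
  split_ifs
  · rw [mul_one, ← Real.cosh_add_sinh]
    field_simp
  · rw [mul_neg_one, ← Real.cosh_sub_sinh]
    field_simp
    ring

/-- Hubbard–Stratonovich: up to a constant, the Curie–Weiss weight is a mixture of the
symmetrised product measures of mean `tanh y`, `y > 0`, with density
`exp (-N (phi β y - φ₀))`. The offset `φ₀` is arbitrary. -/
lemma cw_weight_eq {β : ℝ} (hβ : 0 < β) (φ₀ : ℝ) {N : ℕ} (hN : 0 < N) :
    ∃ A : ℝ, 0 < A ∧ ∀ σ : Fin N → Bool,
      Real.exp (β / (2 * N) * ∑ i, ∑ j, spinVal (σ i) * spinVal (σ j))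
        = A * ∫ y in Set.Ioi 0, Real.exp (-(N * (phi β y - φ₀))) * symW (Real.tanh y) σ := by
  have hN' : (0 : ℝ) < N := by exact_mod_cast hN
  set s : ℝ := √(π / (N / (2 * β))) with hs
  have hs0 : 0 < s := Real.sqrt_pos.2 (by positivity)
  refine ⟨2 * 2 ^ N * Real.exp (-(N * φ₀)) / s, by positivity, fun σ => ?_⟩
  set S := ∑ i, spinVal (σ i) with hS
  have hSS : ∑ i, ∑ j, spinVal (σ i) * spinVal (σ j) = S ^ 2 := by
    rw [pow_two, hS, Finset.sum_mul_sum]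
  rw [hSS]
  set E : ℝ := Real.exp (N * φ₀) / 2 ^ N * Real.exp (β / (2 * N) * S ^ 2) with hE
  set G : ℝ → ℝ := fun y => Real.exp (-(N / (2 * β)) * (y - β * S / N) ^ 2) with hG
  have hGint : ∫ y, G y = s := by
    rw [hG, integral_sub_right_eq_self (fun y => Real.exp (-(N / (2 * β)) * y ^ 2)),
      integral_gaussian]
  have hGi : Integrable G :=
    (integrable_exp_neg_mul_sq (show (0:ℝ) < N / (2 * β) by positivity)).comp_sub_right _
  have hprod : ∀ y, Real.exp (-(N * (phi β y - φ₀))) * prodW (Real.tanh y) σ = E * G y := by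
    intro y
    have e1 : Real.exp (-(N * (phi β y - φ₀)))
        = Real.exp (N * φ₀) * Real.exp (-(N * (y ^ 2 / (2 * β)))) * Real.cosh y ^ N := by
      rw [← Real.exp_log (Real.cosh_pos y), ← Real.exp_nat_mul, ← Real.exp_add, ← Real.exp_add,
        phi]
      congr 1; ring
    rw [e1, mul_assoc, cosh_pow_mul_prodW, hE, hG]
    rw [mul_div_assoc', div_mul_eq_mul_div, div_mul_eq_mul_div, ← Real.exp_add, ← Real.exp_add,
      ← Real.exp_add, ← Real.exp_add]
    congr 2
    field_simp
    ring
  set f : ℝ → ℝ := fun y => Real.exp (-(N * (phi β y - φ₀))) * symW (Real.tanh y) σ with hf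
  have hfG : ∀ y, f y = E / 2 * (G y + G (-y)) := by
    intro y
    have h1 := hprod y
    have h2 := hprod (-y)
    rw [phi_neg, Real.tanh_neg] at h2
    rw [hf]
    simp only [symW]
    linear_combination h1 / 2 + h2 / 2
  have habs : ∀ y, f |y| = f y := by
    intro y
    rcases abs_choice y with h | h <;> rw [h]
    rw [hfG, hfG, neg_neg, add_comm]
  have h2 := integral_comp_abs (f := f)
  simp_rw [habs] at h2
  have h3 : ∫ y, f y = E * s := by
    simp_rw [hfG]
    rw [integral_const_mul, integral_add hGi hGi.comp_neg, integral_neg_eq_self G, hGint]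
    ring
  have h4 : ∫ y in Set.Ioi 0, f y = E * s / 2 := by linarith
  rw [h4, hE]
  have h5 : Real.exp (-(N * φ₀)) * Real.exp (N * φ₀) = 1 := by
    rw [← Real.exp_add]; simp
  field_simp
  linear_combination -h5

/-- The truncated Gaussian mixture, split into the part carried by `|t| ≤ T` (folded by
`t ↦ -t` into a mixture of symmetrised product measures) and the atom produced by the
truncation. -/
lemma nu_split {N : ℕ} {m T : ℝ} (hT : 0 ≤ T) {g : ℝ → ℝ} (hg : Continuous g)
    (hgi : Integrable g) (heven : ∀ t, g (-t) = g t) (σ : Fin N → Bool) :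
    (1 / 2 : ℝ) * ∫ t : ℝ,
        ((∏ i, ((1 + spinVal (σ i) * m) / 2 +
            spinVal (σ i) * (if |t| ≤ T then t else 0) / Real.sqrt N)) +
          ∏ i, ((1 - spinVal (σ i) * m) / 2 +
            spinVal (σ i) * (if |t| ≤ T then t else 0) / Real.sqrt N)) * g t
      = (∫ t in (-T)..T, symW (m + 2 * t / Real.sqrt N) σ * g t)
        + symW m σ * ∫ t in (Set.Icc (-T) T)ᶜ, g t := by
  set s := Real.sqrt N with hs
  have hform : ∀ m' ξ : ℝ, (∏ i, ((1 + spinVal (σ i) * m') / 2 + spinVal (σ i) * ξ / s))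
      = prodW (m' + 2 * ξ / s) σ := fun m' ξ => by
    unfold prodW
    exact Finset.prod_congr rfl fun i _ => by ring
  have hform' : ∀ ξ : ℝ, (∏ i, ((1 - spinVal (σ i) * m) / 2 + spinVal (σ i) * ξ / s))
      = prodW (-m + 2 * ξ / s) σ := fun ξ => by
    rw [← hform]
    exact Finset.prod_congr rfl fun i _ => by ring
  simp_rw [hform, hform']
  set F : ℝ → ℝ := fun t => (prodW (m + 2 * (if |t| ≤ T then t else 0) / s) σ
    + prodW (-m + 2 * (if |t| ≤ T then t else 0) / s) σ) * g t with hF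
  have hP := continuous_prodW σ
  have c1 : Continuous fun t => prodW (m + 2 * t / s) σ * g t :=
    (hP.comp (by fun_prop : Continuous fun t : ℝ => m + 2 * t / s)).mul hg
  have c2 : Continuous fun t => prodW (-m + 2 * t / s) σ * g t :=
    (hP.comp (by fun_prop : Continuous fun t : ℝ => -m + 2 * t / s)).mul hg
  have c3 : Continuous fun t => prodW (-(m + 2 * t / s)) σ * g t :=
    (hP.comp (by fun_prop : Continuous fun t : ℝ => -(m + 2 * t / s))).mul hg
  have f1 : Set.EqOn F (fun t => prodW (m + 2 * t / s) σ * g t + prodW (-m + 2 * t / s) σ * g t)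
      (Set.Icc (-T) T) := by
    intro t ht
    have : |t| ≤ T := abs_le.2 ht
    simp only [hF, if_pos this]
    ring
  have f2 : Set.EqOn F (fun t => 2 * symW m σ * g t) (Set.Icc (-T) T)ᶜ := by
    intro t ht
    have : ¬ |t| ≤ T := fun h => ht (abs_le.1 h)
    simp only [hF, if_neg this, symW, mul_zero, zero_div, add_zero]
    ring
  have i1 : IntegrableOn F (Set.Icc (-T) T) :=
    IntegrableOn.congr_fun ((c1.add c2).integrableOn_Icc) f1.symm measurableSet_Icc
  have i2 : IntegrableOn F (Set.Icc (-T) T)ᶜ :=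
    IntegrableOn.congr_fun ((hgi.const_mul (2 * symW m σ)).integrableOn) f2.symm
      measurableSet_Icc.compl
  have hFi : Integrable F := by
    rw [← integrableOn_univ, ← Set.union_compl_self (Set.Icc (-T) T)]
    exact i1.union i2
  have hle : -T ≤ T := by linarith
  have hneg : ∫ t in (-T)..T, prodW (-m + 2 * t / s) σ * g t
      = ∫ t in (-T)..T, prodW (-(m + 2 * t / s)) σ * g t := by
    have h := intervalIntegral.integral_comp_neg (a := -T) (b := T)
      (fun t => prodW (-m + 2 * t / s) σ * g t)
    rw [neg_neg] at h
    rw [← h]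
    refine intervalIntegral.integral_congr fun t _ => ?_
    simp only [heven]
    congr 2
    ring
  rw [← integral_add_compl measurableSet_Icc hFi, setIntegral_congr_fun measurableSet_Icc f1,
    setIntegral_congr_fun measurableSet_Icc.compl f2, integral_const_mul,
    integral_Icc_eq_integral_Ioc, ← intervalIntegral.integral_of_le hle,
    intervalIntegral.integral_add (c1.intervalIntegrable _ _) (c2.intervalIntegrable _ _), hneg,
    ← intervalIntegral.integral_add (c1.intervalIntegrable _ _) (c3.intervalIntegrable _ _)]
  have : ∀ t, prodW (m + 2 * t / s) σ * g t + prodW (-(m + 2 * t / s)) σ * g t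
      = 2 * (symW (m + 2 * t / s) σ * g t) := fun t => by unfold symW; ring
  simp_rw [this]
  rw [intervalIntegral.integral_const_mul]
  ring

/-- Substituting `t = √N / 2 * (tanh y - m)` in the core of the mixture. -/
lemma core_subst {N : ℕ} (hN : 0 < N) {m T : ℝ} {g : ℝ → ℝ} (hg : Continuous g)
    {l r : ℝ} (hl : Real.tanh l = m - 2 * T / Real.sqrt N)
    (hr : Real.tanh r = m + 2 * T / Real.sqrt N) (σ : Fin N → Bool) :
    (∫ t in (-T)..T, symW (m + 2 * t / Real.sqrt N) σ * g t)
      = ∫ y in l..r, g (Real.sqrt N / 2 * (Real.tanh y - m)) *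
          (Real.sqrt N / 2 * (1 - Real.tanh y ^ 2)) * symW (Real.tanh y) σ := by
  have hs : 0 < Real.sqrt N := Real.sqrt_pos.2 (by exact_mod_cast hN)
  have hQ := continuous_symW σ
  have ht := continuous_tanh'
  have h := intervalIntegral.integral_comp_mul_deriv (a := l) (b := r)
    (f := fun y => Real.sqrt N / 2 * (Real.tanh y - m))
    (f' := fun y => Real.sqrt N / 2 * (1 - Real.tanh y ^ 2))
    (g := fun t => symW (m + 2 * t / Real.sqrt N) σ * g t)
    (fun y _ => ((hasDerivAt_tanh' y).sub_const m).const_mul _)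
    (by fun_prop)
    ((hQ.comp (by fun_prop : Continuous fun t : ℝ => m + 2 * t / Real.sqrt N)).mul hg)
  have e1 : Real.sqrt N / 2 * (Real.tanh l - m) = -T := by rw [hl]; field_simp; ring
  have e2 : Real.sqrt N / 2 * (Real.tanh r - m) = T := by rw [hr]; field_simp; ring
  simp only [e1, e2] at h
  rw [← h]
  refine intervalIntegral.integral_congr fun y _ => ?_
  have e3 : m + 2 * (Real.sqrt N / 2 * (Real.tanh y - m)) / Real.sqrt N = Real.tanh y := by
    field_simp; ring
  simp only [Function.comp, e3]
  ring

/-- The mixture is a probability mass function whose atoms are at least exponentially small. -/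
lemma nu_facts {N : ℕ} {m T q : ℝ} (hm0 : 0 ≤ m) (hT : 0 ≤ T) {g : ℝ → ℝ} (hg : Continuous g)
    (hg0 : ∀ t, 0 ≤ g t) (hgi : Integrable g) (hg1 : ∫ t, g t = 1) (hq : 0 ≤ q)
    (hmT : m + 2 * T / Real.sqrt N ≤ 1 - 2 * q) {ν : (Fin N → Bool) → ℝ}
    (hν : ∀ σ, ν σ = (∫ t in (-T)..T, symW (m + 2 * t / Real.sqrt N) σ * g t)
        + symW m σ * ∫ t in (Set.Icc (-T) T)ᶜ, g t) :
    ∑ σ, ν σ = 1 ∧ ∀ σ, q ^ N ≤ ν σ := by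
  have hle : -T ≤ T := by linarith
  have hs : 0 ≤ Real.sqrt N := Real.sqrt_nonneg _
  have hcont : ∀ σ : Fin N → Bool, Continuous fun t => symW (m + 2 * t / Real.sqrt N) σ * g t :=
    fun σ => ((continuous_symW σ).comp
      (by fun_prop : Continuous fun t : ℝ => m + 2 * t / Real.sqrt N)).mul hg
  have htot : (∫ t in (-T)..T, g t) + ∫ t in (Set.Icc (-T) T)ᶜ, g t = 1 := by
    rw [intervalIntegral.integral_of_le hle, ← integral_Icc_eq_integral_Ioc,
      integral_add_compl measurableSet_Icc hgi, hg1]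
  have hTs : 0 ≤ 2 * T / Real.sqrt N := by positivity
  refine ⟨?_, fun σ => ?_⟩
  · simp_rw [hν]
    rw [Finset.sum_add_distrib, ← Finset.sum_mul, sum_symW, one_mul,
      ← intervalIntegral.integral_finsetSum fun σ _ => (hcont σ).intervalIntegrable _ _]
    simp_rw [← Finset.sum_mul, sum_symW, one_mul]
    exact htot
  · have h1 : q ^ N * ∫ t in (-T)..T, g t
        ≤ ∫ t in (-T)..T, symW (m + 2 * t / Real.sqrt N) σ * g t := by
      rw [← intervalIntegral.integral_const_mul]
      refine intervalIntegral.integral_mono_on hle ((hg.intervalIntegrable _ _).const_mul _)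
        ((hcont σ).intervalIntegrable _ _) fun t ht => ?_
      refine mul_le_mul_of_nonneg_right (pow_le_symW hq ?_ σ) (hg0 t)
      have a1 : 2 * t / Real.sqrt N ≤ 2 * T / Real.sqrt N := by
        have := ht.2
        gcongr
      have a2 : 2 * (-T) / Real.sqrt N ≤ 2 * t / Real.sqrt N := by
        have := ht.1
        gcongr
      have a3 : 2 * (-T) / Real.sqrt N = -(2 * T / Real.sqrt N) := by ring
      rw [abs_le]; constructor <;> linarith
    have h2 : q ^ N * ∫ t in (Set.Icc (-T) T)ᶜ, g t
        ≤ symW m σ * ∫ t in (Set.Icc (-T) T)ᶜ, g t := by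
      refine mul_le_mul_of_nonneg_right (pow_le_symW hq ?_ σ) (integral_nonneg hg0)
      rw [abs_of_nonneg hm0]; linarith
    have h3 := congrArg (q ^ N * ·) htot
    simp only [mul_add, mul_one] at h3
    rw [hν]; linarith

/-! ### Laplace estimates -/

lemma gauss_tail {b d y₀ : ℝ} (hb : 0 < b) {U : Set ℝ} (hU : MeasurableSet U)
    (hd : ∀ y ∈ U, d ^ 2 ≤ (y - y₀) ^ 2) :
    ∫ y in U, Real.exp (-b * (y - y₀) ^ 2)
      ≤ Real.exp (-(b / 2) * d ^ 2) * √(π / (b / 2)) := by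
  have i1 : Integrable fun y => Real.exp (-b * (y - y₀) ^ 2) :=
    (integrable_exp_neg_mul_sq hb).comp_sub_right y₀
  have i2 : Integrable fun y => Real.exp (-(b / 2) * (y - y₀) ^ 2) :=
    (integrable_exp_neg_mul_sq (half_pos hb)).comp_sub_right y₀
  have h2 : ∫ y, Real.exp (-(b / 2) * (y - y₀) ^ 2) = √(π / (b / 2)) := by
    rw [integral_sub_right_eq_self (fun y => Real.exp (-(b / 2) * y ^ 2)), integral_gaussian]
  calc ∫ y in U, Real.exp (-b * (y - y₀) ^ 2)
      ≤ ∫ y in U, Real.exp (-(b / 2) * d ^ 2) * Real.exp (-(b / 2) * (y - y₀) ^ 2) := by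
        refine setIntegral_mono_on i1.integrableOn (i2.const_mul _).integrableOn hU fun y hy => ?_
        rw [← Real.exp_add, Real.exp_le_exp]
        nlinarith [hd y hy]
    _ = Real.exp (-(b / 2) * d ^ 2) * ∫ y in U, Real.exp (-(b / 2) * (y - y₀) ^ 2) :=
        integral_const_mul _ _
    _ ≤ _ := by
        rw [← h2]
        exact mul_le_mul_of_nonneg_left (setIntegral_le_integral i2
          (Eventually.of_forall fun y => (Real.exp_pos _).le)) (Real.exp_pos _).le

/-- The mixing density on the half-line is integrable, and the mass at distance at least `d`
from its mode is an `O(exp (-(c / 2) N d²))` fraction of the total. -/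
lemma laplace_tail {β y₀ c C : ℝ} (hβ : 0 < β) (hy₀ : 0 < y₀) (hc : 0 < c) (hC : 0 ≤ C)
    (hlow : ∀ y, 0 ≤ y → c * (y - y₀) ^ 2 ≤ phi β y - phi β y₀)
    (hup : ∀ y, |y - y₀| ≤ 1 → phi β y - phi β y₀ ≤ C * (y - y₀) ^ 2)
    {N : ℕ} (hN : 0 < N) :
    IntegrableOn (fun y => Real.exp (-(N * (phi β y - phi β y₀)))) (Set.Ioi 0) ∧
    ∀ {U : Set ℝ} {d : ℝ}, MeasurableSet U → U ⊆ Set.Ioi 0 →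
      (∀ y ∈ U, d ^ 2 ≤ (y - y₀) ^ 2) →
      ∫ y in U, Real.exp (-(N * (phi β y - phi β y₀)))
        ≤ Real.exp C * √(2 * π / c) * Real.exp (-(c / 2) * (N * d ^ 2))
          * ∫ y in Set.Ioi 0, Real.exp (-(N * (phi β y - phi β y₀))) := by
  have hN' : (0 : ℝ) < N := by exact_mod_cast hN
  have hN1 : (1 : ℝ) ≤ N := by exact_mod_cast hN
  have hNc : 0 < N * c := by positivity
  have hcont : Continuous fun y => Real.exp (-(N * (phi β y - phi β y₀))) := by
    have := continuous_phi hβ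
    fun_prop
  have hdom : ∀ y ∈ Set.Ioi (0 : ℝ), Real.exp (-(N * (phi β y - phi β y₀)))
      ≤ Real.exp (-(N * c) * (y - y₀) ^ 2) := by
    intro y hy
    rw [Real.exp_le_exp]
    have := mul_le_mul_of_nonneg_left (hlow y (le_of_lt hy)) hN'.le
    linarith
  have i1 : Integrable fun y => Real.exp (-(N * c) * (y - y₀) ^ 2) :=
    (integrable_exp_neg_mul_sq hNc).comp_sub_right y₀
  have hint : IntegrableOn (fun y => Real.exp (-(N * (phi β y - phi β y₀)))) (Set.Ioi 0) := by
    refine Integrable.mono' i1.integrableOn hcont.aestronglyMeasurable ?_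
    filter_upwards [ae_restrict_mem measurableSet_Ioi] with y hy
    rw [Real.norm_eq_abs, abs_of_pos (Real.exp_pos _)]
    exact hdom y hy
  refine ⟨hint, fun {U d} hU hUpos hd => ?_⟩
  have hs : 0 < √(N : ℝ) := Real.sqrt_pos.2 hN'
  have hs1 : 1 ≤ √(N : ℝ) := Real.one_le_sqrt.2 hN1
  -- the window of width `1 / √N` at the mode already carries mass of order `1 / √N`
  have low : Real.exp (-C) / √(N : ℝ)
      ≤ ∫ y in Set.Ioi 0, Real.exp (-(N * (phi β y - phi β y₀))) := by
    have sub : Set.Icc y₀ (y₀ + 1 / √(N : ℝ)) ⊆ Set.Ioi 0 := fun y hy => hy₀.trans_le hy.1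
    have hnn : 0 ≤ 1 / √(N : ℝ) := by positivity
    calc Real.exp (-C) / √(N : ℝ)
        = ∫ y in Set.Icc y₀ (y₀ + 1 / √(N : ℝ)), Real.exp (-C) := by
          rw [setIntegral_const, Measure.real, Real.volume_Icc, add_sub_cancel_left,
            ENNReal.toReal_ofReal hnn, smul_eq_mul]
          ring
      _ ≤ ∫ y in Set.Icc y₀ (y₀ + 1 / √(N : ℝ)), Real.exp (-(N * (phi β y - phi β y₀))) := by
          refine setIntegral_mono_on (integrableOn_const (by simp))
            (hcont.integrableOn_Icc) measurableSet_Icc fun y hy => ?_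
          rw [Real.exp_le_exp, neg_le_neg_iff]
          have h0 : 0 ≤ y - y₀ := sub_nonneg.2 hy.1
          have h1 : y - y₀ ≤ 1 / √(N : ℝ) := by linarith [hy.2]
          have h2 : 1 / √(N : ℝ) ≤ 1 := (div_le_one hs).2 hs1
          have h3 := hup y (by rw [abs_of_nonneg h0]; linarith)
          have h4 : (y - y₀) ^ 2 ≤ 1 / (N : ℝ) := by
            calc (y - y₀) ^ 2 ≤ (1 / √(N : ℝ)) ^ 2 := by gcongr
              _ = 1 / (N : ℝ) := by rw [div_pow, Real.sq_sqrt hN'.le, one_pow]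
          calc N * (phi β y - phi β y₀) ≤ N * (C * (1 / (N : ℝ))) := by
                gcongr
                exact h3.trans (by gcongr)
            _ = C := by field_simp
      _ ≤ _ := setIntegral_mono_set hint
          (Eventually.of_forall fun y => (Real.exp_pos _).le) sub.eventuallyLE
  have e : √(π / (N * c / 2)) = √(2 * π / c) / √(N : ℝ) := by
    rw [← Real.sqrt_div (by positivity)]
    congr 1
    field_simp
  calc ∫ y in U, Real.exp (-(N * (phi β y - phi β y₀)))
      ≤ ∫ y in U, Real.exp (-(N * c) * (y - y₀) ^ 2) :=
        setIntegral_mono_on (hint.mono_set hUpos) i1.integrableOn hU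
          fun y hy => hdom y (hUpos hy)
    _ ≤ Real.exp (-(N * c / 2) * d ^ 2) * √(π / (N * c / 2)) := gauss_tail hNc hU hd
    _ = Real.exp C * √(2 * π / c) * Real.exp (-(c / 2) * (N * d ^ 2))
          * (Real.exp (-C) / √(N : ℝ)) := by
        rw [e, Real.exp_neg C]
        have : -(N * c / 2) * d ^ 2 = -(c / 2) * (N * d ^ 2) := by ring
        rw [this]
        field_simp
    _ ≤ _ := by gcongr

/-- On the core the two mixing densities are proportional up to the factor
`exp (C₁ N L³) (1 + C₂ L)`, where `2 L` is the half-width of the core in the mean parameter. -/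
lemma density_compare {β m r2 : ℝ} (hβ : 1 < β) (hm0 : 0 < m) (hm1 : m < 1)
    (hsol : m = Real.tanh (β * m)) (hr : 0 < r2)
    (hκ : 2 * (1 / (8 * r2)) * (1 - m ^ 2) ^ 2 = 1 / β - (1 - m ^ 2)) :
    ∃ C₁ C₂ : ℝ, 0 ≤ C₁ ∧ 0 ≤ C₂ ∧ ∀ (N : ℕ) (L y : ℝ), 0 < N → 0 ≤ L →
      m + 2 * L ≤ (1 + m) / 2 → 0 ≤ y → |Real.tanh y - m| ≤ 2 * L →
      ∃ w n K c : ℝ, w = Real.exp (-(N * (phi β y - phi β (β * m)))) ∧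
        n = Real.exp (-(√(N : ℝ) / 2 * (Real.tanh y - m)) ^ 2 / (2 * r2)) / √(2 * π * r2)
          * (√(N : ℝ) / 2 * (1 - Real.tanh y ^ 2)) ∧
        K = √(2 * π * r2) * 2 / (√(N : ℝ) * (1 - m ^ 2)) ∧
        c = Real.exp (C₁ * (N * L ^ 3)) * (1 + C₂ * L) ∧
        w ≤ K * c * n ∧ n ≤ c / K * w := by
  obtain ⟨C, hC, hcub⟩ := phi_cubic hβ hm0 hm1 hsol hκ
  set a' : ℝ := 1 - ((1 + m) / 2) ^ 2 with ha'
  have ha'0 : 0 < a' := by rw [ha']; nlinarith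
  have haa' : a' ≤ 1 - m ^ 2 := by rw [ha']; nlinarith
  have ha0 : 0 < 1 - m ^ 2 := by linarith
  refine ⟨C * (2 / a') ^ 3, 4 / a', by positivity, by positivity, ?_⟩
  intro N L y hN hL hmL hy hTL
  refine ⟨_, _, _, _, rfl, rfl, rfl, rfl, ?_⟩
  have hN' : (0 : ℝ) < N := by exact_mod_cast hN
  have hs : 0 < √(N : ℝ) := Real.sqrt_pos.2 hN'
  have hr' : 0 < √(2 * π * r2) := Real.sqrt_pos.2 (by positivity)
  have hy₀ : 0 ≤ β * m := by positivity
  have hT := abs_le.1 hTL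
  set T := Real.tanh y with hTdef
  have hT0 : 0 ≤ T := by
    rw [hTdef, ← Real.tanh_zero]; exact strictMono_tanh'.monotone hy
  have hTa : a' ≤ 1 - T ^ 2 := by rw [ha']; nlinarith
  have hT2 : 0 < 1 - T ^ 2 := by linarith
  have hu : |y - β * m| ≤ 2 / a' * L := by
    have key : a' * |y - β * m| ≤ 2 * L := by
      rcases le_total y (β * m) with h | h
      · have h1 := mul_sub_le_tanh_sub hy h
        rw [← hsol, ← hTdef] at h1
        rw [abs_of_nonpos (by linarith)]
        have : a' * -(y - β * m) ≤ (1 - m ^ 2) * (β * m - y) := by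
          rw [neg_sub]; exact mul_le_mul_of_nonneg_right haa' (by linarith)
        linarith
      · have h1 := mul_sub_le_tanh_sub hy₀ h
        rw [← hsol, ← hTdef] at h1
        rw [abs_of_nonneg (by linarith)]
        have : a' * (y - β * m) ≤ (1 - T ^ 2) * (y - β * m) :=
          mul_le_mul_of_nonneg_right hTa (by linarith)
        linarith
    rw [div_mul_eq_mul_div, le_div_iff₀ ha'0]; linarith
  set F := phi β y - phi β (β * m) - 1 / (8 * r2) * (T - m) ^ 2 with hF
  have hNF : |N * F| ≤ C * (2 / a') ^ 3 * (N * L ^ 3) := by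
    rw [abs_mul, abs_of_pos hN']
    calc N * |F| ≤ N * (C * |y - β * m| ^ 3) := by gcongr; exact hcub y
      _ ≤ N * (C * (2 / a' * L) ^ 3) := by gcongr
      _ = _ := by ring
  set X := Real.exp (C * (2 / a') ^ 3 * (N * L ^ 3)) with hX
  set G := Real.exp (-(N * (1 / (8 * r2) * (T - m) ^ 2))) with hG
  have eW : Real.exp (-(N * (phi β y - phi β (β * m)))) = Real.exp (-(N * F)) * G := by
    rw [hG, ← Real.exp_add, hF]; congr 1; ring
  have eG : Real.exp (-(√(N : ℝ) / 2 * (T - m)) ^ 2 / (2 * r2)) = G := by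
    rw [hG]
    congr 1
    rw [mul_pow, div_pow, Real.sq_sqrt hN'.le]
    field_simp
    ring
  have x1 : Real.exp (-(N * F)) ≤ X := by
    rw [hX, Real.exp_le_exp]; linarith [(abs_le.1 hNF).1]
  have x2 : 1 ≤ X * Real.exp (-(N * F)) := by
    rw [hX, ← Real.exp_add]
    exact Real.one_le_exp (by linarith [(abs_le.1 hNF).2])
  have hdiff : |T ^ 2 - m ^ 2| ≤ 4 / a' * L * a' := by
    have e : 4 / a' * L * a' = 2 * L * 2 := by field_simp; ring
    have e2 : T ^ 2 - m ^ 2 = (T - m) * (T + m) := by ring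
    rw [e, e2, abs_mul]
    have hTlt : T < 1 := Real.tanh_lt_one y
    gcongr
    rw [abs_of_nonneg (by linarith)]; linarith
  have hC2L : 0 ≤ 4 / a' * L := by positivity
  have r1 : 1 - m ^ 2 ≤ (1 + 4 / a' * L) * (1 - T ^ 2) := by
    have := mul_le_mul_of_nonneg_left hTa hC2L
    linarith [(abs_le.1 hdiff).2]
  have r2' : 1 - T ^ 2 ≤ (1 + 4 / a' * L) * (1 - m ^ 2) := by
    have := mul_le_mul_of_nonneg_left haa' hC2L
    linarith [(abs_le.1 hdiff).1]
  rw [eW, eG]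
  have hX0 : 0 < X := Real.exp_pos _
  have hG0 : 0 < G := Real.exp_pos _
  have hF0 : 0 < Real.exp (-(N * F)) := Real.exp_pos _
  constructor
  · have e : √(2 * π * r2) * 2 / (√(N : ℝ) * (1 - m ^ 2)) * (X * (1 + 4 / a' * L)) *
        (G / √(2 * π * r2) * (√(N : ℝ) / 2 * (1 - T ^ 2)))
        = X * G * (((1 + 4 / a' * L) * (1 - T ^ 2)) / (1 - m ^ 2)) := by
      field_simp
    rw [e]
    have : 1 ≤ ((1 + 4 / a' * L) * (1 - T ^ 2)) / (1 - m ^ 2) := (one_le_div ha0).2 r1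
    calc Real.exp (-(N * F)) * G ≤ X * G * 1 := by rw [mul_one]; gcongr
      _ ≤ _ := by gcongr
  · have e : X * (1 + 4 / a' * L) / (√(2 * π * r2) * 2 / (√(N : ℝ) * (1 - m ^ 2))) *
        (Real.exp (-(N * F)) * G)
        = G / √(2 * π * r2) * (√(N : ℝ) / 2 *
          ((X * Real.exp (-(N * F))) * ((1 + 4 / a' * L) * (1 - m ^ 2)))) := by
      field_simp
    rw [e]
    gcongr
    calc 1 - T ^ 2 ≤ 1 * ((1 + 4 / a' * L) * (1 - m ^ 2)) := by rw [one_mul]; exact r2'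
      _ ≤ _ := by gcongr

/-! ### Limits of the error terms -/

lemma tendsto_width {δ : ℝ} (hδ : δ < 1 / 6) :
    Tendsto (fun N : ℕ => (N : ℝ) ^ δ / √(N : ℝ)) atTop (nhds 0) ∧
    Tendsto (fun N : ℕ => (N : ℝ) * ((N : ℝ) ^ δ / √(N : ℝ)) ^ 3) atTop (nhds 0) := by
  have e : ∀ N : ℕ, 0 < N → (N : ℝ) ^ δ / √(N : ℝ) = (N : ℝ) ^ (δ - 1 / 2) := by
    intro N hN
    have hN' : (0 : ℝ) < N := by exact_mod_cast hN
    rw [Real.sqrt_eq_rpow, ← Real.rpow_sub hN']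
  constructor
  · have h := (tendsto_rpow_neg_atTop (y := 1 / 2 - δ) (by linarith)).comp
      tendsto_natCast_atTop_atTop
    refine h.congr' ?_
    filter_upwards [eventually_gt_atTop 0] with N hN
    rw [e N hN, Function.comp_apply, neg_sub]
  · have h := (tendsto_rpow_neg_atTop (y := 1 / 2 - 3 * δ) (by linarith)).comp
      tendsto_natCast_atTop_atTop
    refine h.congr' ?_
    filter_upwards [eventually_gt_atTop 0] with N hN
    have hN' : (0 : ℝ) < N := by exact_mod_cast hN
    rw [e N hN, Function.comp_apply, ← Real.rpow_natCast, ← Real.rpow_mul hN'.le,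
      ← Real.rpow_one_add' hN'.le (by push_cast; linarith)]
    congr 1
    push_cast
    ring

lemma tendsto_mul_exp_neg {δ k D : ℝ} (hδ : 0 < δ) (hk : 0 < k) :
    Tendsto (fun N : ℕ => D * Real.exp (-k * ((N : ℝ) ^ δ) ^ 2)) atTop (nhds 0) ∧
    Tendsto (fun N : ℕ => (N : ℝ) * (D * Real.exp (-k * ((N : ℝ) ^ δ) ^ 2))) atTop (nhds 0) := by
  have hx : Tendsto (fun N : ℕ => (N : ℝ) ^ (2 * δ)) atTop atTop :=
    (tendsto_rpow_atTop (by positivity)).comp tendsto_natCast_atTop_atTop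
  have e : ∀ N : ℕ, ((N : ℝ) ^ δ) ^ 2 = (N : ℝ) ^ (2 * δ) := fun N => by
    rw [← Real.rpow_natCast, ← Real.rpow_mul (Nat.cast_nonneg N), mul_comm]
    norm_num
  constructor
  · have h := ((tendsto_rpow_mul_exp_neg_mul_atTop_nhds_zero 0 k hk).comp hx).const_mul D
    rw [mul_zero] at h
    refine h.congr fun N => ?_
    simp [e]
  · have h := ((tendsto_rpow_mul_exp_neg_mul_atTop_nhds_zero (1 / (2 * δ)) k hk).comp
      hx).const_mul D
    rw [mul_zero] at h
    refine h.congr fun N => ?_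
    simp only [Function.comp_apply]
    rw [← Real.rpow_mul (Nat.cast_nonneg N), mul_one_div_cancel (by positivity), Real.rpow_one, e]
    ring

/-! ### The two entropies -/

/-- The Curie–Weiss measure is a probability mass function whose atoms are at least
exponentially small. -/
lemma cw_facts {β : ℝ} (hβ : 0 < β) {N : ℕ} {E : (Fin N → Bool) → ℝ}
    (hE : ∀ σ, E σ = Real.exp (β / (2 * N) * ∑ i, ∑ j, spinVal (σ i) * spinVal (σ j)))
    {Z : ℝ} (hZ : Z = ∑ σ, E σ) :
    0 < Z ∧ ∑ σ, E σ / Z = 1 ∧ ∀ σ, Real.exp (-((Real.log 2 + β / 2) * N)) ≤ E σ / Z := by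
  have hSS : ∀ σ : Fin N → Bool, ∑ i, ∑ j, spinVal (σ i) * spinVal (σ j)
      = (∑ i, spinVal (σ i)) ^ 2 := fun σ => by
    rw [pow_two, Finset.sum_mul_sum]
  have habs : ∀ b, |spinVal b| = 1 := fun b => by cases b <;> simp [spinVal]
  have hS : ∀ σ : Fin N → Bool, (∑ i, spinVal (σ i)) ^ 2 ≤ (N : ℝ) ^ 2 := fun σ => by
    have h : |∑ i, spinVal (σ i)| ≤ N := by
      refine (Finset.abs_sum_le_sum_abs _ _).trans ?_
      simp [habs]
    exact sq_le_sq' (by linarith [(abs_le.1 h).1]) (abs_le.1 h).2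
  have h1 : ∀ σ, 1 ≤ E σ := fun σ => by
    rw [hE, hSS]
    exact Real.one_le_exp (by positivity)
  have h2 : ∀ σ, E σ ≤ Real.exp (β / 2 * N) := fun σ => by
    rw [hE, hSS, Real.exp_le_exp]
    rcases Nat.eq_zero_or_pos N with rfl | hN
    · simp
    · have hN' : (0 : ℝ) < N := by exact_mod_cast hN
      calc β / (2 * N) * (∑ i, spinVal (σ i)) ^ 2 ≤ β / (2 * N) * (N : ℝ) ^ 2 := by
            exact mul_le_mul_of_nonneg_left (hS σ) (by positivity)
        _ = β / 2 * N := by field_simp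
  have hZ0 : 0 < Z := by
    rw [hZ]
    exact Finset.sum_pos (fun σ _ => by linarith [h1 σ]) Finset.univ_nonempty
  have hZle : Z ≤ Real.exp ((Real.log 2 + β / 2) * N) := by
    calc Z ≤ ∑ _σ : Fin N → Bool, Real.exp (β / 2 * N) := by
          rw [hZ]; exact Finset.sum_le_sum fun σ _ => h2 σ
      _ = 2 ^ N * Real.exp (β / 2 * N) := by simp
      _ = Real.exp ((Real.log 2 + β / 2) * N) := by
          rw [add_mul, Real.exp_add, mul_comm (Real.log 2), Real.exp_nat_mul,
            Real.exp_log (by norm_num)]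
  refine ⟨hZ0, by rw [← Finset.sum_div, ← hZ, div_self hZ0.ne'], fun σ => ?_⟩
  rw [Real.exp_neg, le_div_iff₀ hZ0, ← div_eq_inv_mul, div_le_iff₀ (Real.exp_pos _)]
  nlinarith [h1 σ, Real.exp_pos ((Real.log 2 + β / 2) * N)]

/-- Basic facts about the centred Gaussian density `g` of variance `r2`. -/
lemma gauss_facts {r2 : ℝ} (hr : 0 < r2) {g : ℝ → ℝ}
    (hg : ∀ t, g t = Real.exp (-t ^ 2 / (2 * r2)) / Real.sqrt (2 * Real.pi * r2)) :
    Continuous g ∧ (∀ t, 0 ≤ g t) ∧ (∀ t, g (-t) = g t) ∧ Integrable g ∧ ∫ t, g t = 1 ∧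
    ∃ D, 0 ≤ D ∧ ∀ T, 0 ≤ T →
      ∫ t in (Set.Icc (-T) T)ᶜ, g t ≤ D * Real.exp (-(1 / (2 * r2) / 2) * T ^ 2) := by
  have hs : 0 < √(2 * π * r2) := Real.sqrt_pos.2 (by positivity)
  have hb : 0 < 1 / (2 * r2) := by positivity
  have e : g = fun t => Real.exp (-(1 / (2 * r2)) * t ^ 2) / √(2 * π * r2) := by
    funext t
    rw [hg]
    congr 2
    field_simp
  refine ⟨by rw [e]; fun_prop, fun t => by rw [hg]; positivity,
    fun t => by rw [hg, hg, neg_sq], by rw [e]; exact (integrable_exp_neg_mul_sq hb).div_const _,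
    ?_, √(π / (1 / (2 * r2) / 2)) / √(2 * π * r2), by positivity, fun T hT => ?_⟩
  · rw [e, integral_div, integral_gaussian, div_eq_one_iff_eq hs.ne']
    congr 1
    field_simp
  · have h := gauss_tail (y₀ := 0) (d := T) hb (measurableSet_Icc (a := -T) (b := T)).compl
      (fun y hy => by
        rw [sub_zero]
        have : ¬ |y| ≤ T := fun h => hy (abs_le.1 h)
        rw [← sq_abs y]
        gcongr
        exact (not_le.1 this).le)
    simp only [sub_zero] at h
    rw [e, integral_div, div_mul_eq_mul_div]
    gcongr
    linarith

set_option maxHeartbeats 1000000 in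
/-- The Curie–Weiss measure and the truncated Gaussian mixture dominate each other up to factors
`c N ^ 2 / (1 - ·)`, `c N → 1`, and errors of mass
`O(exp (-k N ^ (2 δ)))`. -/
lemma cw_compare {β m r2 δ : ℝ} (hβ : 1 < β) (hm0 : 0 < m) (hm1 : m < 1)
    (hsol : m = Real.tanh (β * m)) (hr : 0 < r2)
    (hκ : 2 * (1 / (8 * r2)) * (1 - m ^ 2) ^ 2 = 1 / β - (1 - m ^ 2))
    (hδ0 : 0 < δ) (hδ : δ < 1 / 6)
    {Z : ℕ → ℝ} (hZ : ∀ N : ℕ, Z N = ∑ σ : Fin N → Bool,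
      Real.exp (β / (2 * N) * ∑ i, ∑ j, spinVal (σ i) * spinVal (σ j)))
    {μ : ∀ N : ℕ, (Fin N → Bool) → ℝ}
    (hμ : ∀ N σ, μ N σ =
      Real.exp (β / (2 * N) * ∑ i, ∑ j, spinVal (σ i) * spinVal (σ j)) / Z N)
    {g : ℝ → ℝ}
    (hgauss : ∀ t, g t = Real.exp (-t ^ 2 / (2 * r2)) / Real.sqrt (2 * Real.pi * r2))
    {ν : ∀ N : ℕ, (Fin N → Bool) → ℝ}
    (hν : ∀ N σ, ν N σ = (1 / 2 : ℝ) *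
      ∫ t : ℝ,
        ((∏ i, ((1 + spinVal (σ i) * m) / 2 +
            spinVal (σ i) * (if |t| ≤ (N : ℝ) ^ δ then t else 0) / Real.sqrt N)) +
          ∏ i, ((1 - spinVal (σ i) * m) / 2 +
            spinVal (σ i) * (if |t| ≤ (N : ℝ) ^ δ then t else 0) / Real.sqrt N)) * g t) :
    ∃ (c α B : ℕ → ℝ) (M : ℝ), 0 ≤ M ∧ Tendsto c atTop (nhds 1) ∧
      Tendsto α atTop (nhds 0) ∧ Tendsto (fun N : ℕ => (N : ℝ) * α N) atTop (nhds 0) ∧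
      Tendsto B atTop (nhds 0) ∧ Tendsto (fun N : ℕ => (N : ℝ) * B N) atTop (nhds 0) ∧
      ∀ᶠ N : ℕ in atTop, ∑ σ, μ N σ = 1 ∧ ∑ σ, ν N σ = 1 ∧
        (∀ σ, Real.exp (-(M * N)) ≤ μ N σ) ∧ (∀ σ, Real.exp (-(M * N)) ≤ ν N σ) ∧
        1 ≤ c N ∧ 0 ≤ α N ∧ α N < 1 ∧ 0 ≤ B N ∧ B N < 1 ∧
        (∃ b : (Fin N → Bool) → ℝ, (∀ σ, 0 ≤ b σ) ∧ ∑ σ, b σ ≤ B N ∧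
          ∀ σ, μ N σ ≤ c N ^ 2 / (1 - α N) * ν N σ + b σ) ∧
        ∃ a : (Fin N → Bool) → ℝ, (∀ σ, 0 ≤ a σ) ∧ ∑ σ, a σ ≤ α N ∧
          ∀ σ, ν N σ ≤ c N ^ 2 / (1 - B N) * μ N σ + a σ := by
  have hβ0 : 0 < β := by linarith
  obtain ⟨gc, g0, geven, gi, g1, D, hD, htail⟩ := gauss_facts hr hgauss
  obtain ⟨k, hk, hlow, C, hC, hup⟩ := phi_quadratic hβ hm0 hm1 hsol
  obtain ⟨C₁, C₂, hC₁, hC₂, hcomp⟩ := density_compare hβ hm0 hm1 hsol hr hκ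
  obtain ⟨hL0, hL3⟩ := tendsto_width hδ
  set L : ℕ → ℝ := fun N => (N : ℝ) ^ δ / √(N : ℝ) with hL
  set c : ℕ → ℝ := fun N => Real.exp (C₁ * (N * L N ^ 3)) * (1 + C₂ * L N) with hcdef
  set α : ℕ → ℝ := fun N => D * Real.exp (-(1 / (2 * r2) / 2) * ((N : ℝ) ^ δ) ^ 2) with hα
  set B : ℕ → ℝ := fun N =>
    Real.exp C * √(2 * π / k) * Real.exp (-(2 * k) * ((N : ℝ) ^ δ) ^ 2) with hB
  set q : ℝ := (1 - m) / 4 with hq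
  have hq0 : 0 < q := by rw [hq]; linarith
  have hq1 : q < 1 := by rw [hq]; linarith
  have hlq : Real.log q < 0 := Real.log_neg hq0 hq1
  have hl2 : 0 < Real.log 2 := Real.log_pos (by norm_num)
  obtain ⟨hα0, hNα⟩ := tendsto_mul_exp_neg (D := D) hδ0
    (show 0 < 1 / (2 * r2) / 2 by positivity)
  obtain ⟨hB0, hNB⟩ := tendsto_mul_exp_neg (D := Real.exp C * √(2 * π / k)) hδ0
    (show 0 < 2 * k by positivity)
  refine ⟨c, α, B, Real.log 2 + β / 2 - Real.log q, by linarith, ?_, hα0, hNα, hB0, hNB, ?_⟩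
  · have h1 : Tendsto (fun N : ℕ => Real.exp (C₁ * (N * L N ^ 3))) atTop (nhds 1) := by
      have := (hL3.const_mul C₁).rexp
      rwa [mul_zero, Real.exp_zero] at this
    have h2 : Tendsto (fun N : ℕ => 1 + C₂ * L N) atTop (nhds 1) := by
      have := (hL0.const_mul C₂).const_add 1
      rwa [mul_zero, add_zero] at this
    have := h1.mul h2
    rwa [mul_one] at this
  filter_upwards [eventually_gt_atTop 0, hα0.eventually (gt_mem_nhds one_pos),
    hB0.eventually (gt_mem_nhds one_pos),
    hL0.eventually (gt_mem_nhds (show 0 < (1 - m) / 4 by linarith)),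
    hL0.eventually (gt_mem_nhds (show 0 < m / 2 by linarith))] with N hN hα1 hB1 hLa hLb
  have hN' : (0 : ℝ) < N := by exact_mod_cast hN
  have hs : 0 < √(N : ℝ) := Real.sqrt_pos.2 hN'
  set T : ℝ := (N : ℝ) ^ δ with hT
  have hT0 : 0 < T := Real.rpow_pos_of_pos hN' δ
  have hLN : L N = T / √(N : ℝ) := rfl
  have hLpos : 0 < L N := by rw [hLN]; positivity
  have h2L : 2 * T / √(N : ℝ) = 2 * L N := by rw [hLN]; ring
  obtain ⟨hZ0, sμ, lowμ⟩ := cw_facts hβ0 (N := N) (fun _ => rfl) (hZ N)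
  simp_rw [← hμ] at sμ lowμ
  have hνs : ∀ σ, ν N σ = (∫ t in (-T)..T, symW (m + 2 * t / Real.sqrt N) σ * g t)
      + symW m σ * ∫ t in (Set.Icc (-T) T)ᶜ, g t := fun σ => by
    rw [hν]; exact nu_split hT0.le gc gi geven σ
  obtain ⟨sν, lowν⟩ := nu_facts hm0.le hT0.le gc g0 gi g1 hq0.le
    (by rw [h2L, hq]; linarith) hνs
  have hc1 : 1 ≤ c N := by
    refine one_le_mul_of_one_le_of_one_le (Real.one_le_exp (by positivity)) ?_
    have : 0 ≤ C₂ * L N := by positivity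
    linarith
  have hl_mem : m - 2 * L N ∈ Set.Ioo (-1 : ℝ) 1 := ⟨by linarith, by linarith⟩
  have hr_mem : m + 2 * L N ∈ Set.Ioo (-1 : ℝ) 1 := ⟨by linarith, by linarith⟩
  set l := Real.artanh (m - 2 * L N) with hl
  set r := Real.artanh (m + 2 * L N) with hr'
  have tl : Real.tanh l = m - 2 * L N := Real.tanh_artanh hl_mem
  have tr : Real.tanh r = m + 2 * L N := Real.tanh_artanh hr_mem
  have hl0 : 0 < l := Real.artanh_pos ⟨by linarith, by linarith⟩
  have hlr : l ≤ r := Real.artanh_le_artanh hl_mem.1 hr_mem.2 (by linarith)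
  have mono := strictMono_tanh'
  have hSpos : Set.Ioc l r ⊆ Set.Ioi 0 := fun y hy => hl0.trans hy.1
  have hin : ∀ y ∈ Set.Ioc l r, |Real.tanh y - m| ≤ 2 * L N := fun y hy => by
    have h1 := mono.monotone hy.1.le
    have h2 := mono.monotone hy.2
    rw [tl] at h1
    rw [tr] at h2
    rw [abs_le]; constructor <;> linarith
  have hout : ∀ y ∈ Set.Ioi (0 : ℝ) \ Set.Ioc l r, (2 * L N) ^ 2 ≤ (y - β * m) ^ 2 := by
    intro y hy
    have h3 : 2 * L N ≤ |Real.tanh y - m| := by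
      rcases le_or_gt y l with h | h
      · have := mono.monotone h
        rw [tl] at this
        rw [abs_of_nonpos (by linarith)]; linarith
      · have hry : r ≤ y := by
          by_contra hcon
          exact hy.2 ⟨h, (not_le.1 hcon).le⟩
        have := mono.monotone hry
        rw [tr] at this
        rw [abs_of_nonneg (by linarith)]; linarith
    have h4 := abs_tanh_sub_le y (β * m)
    rw [← hsol] at h4
    rw [← sq_abs (y - β * m)]
    gcongr
    linarith
  obtain ⟨wi, wtail⟩ := laplace_tail hβ0 (mul_pos hβ0 hm0) hk hC hlow hup hN
  obtain ⟨A, hA, hAeq⟩ := cw_weight_eq hβ0 (phi β (β * m)) hN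
  set w : ℝ → ℝ := fun y => Real.exp (-(N * (phi β y - phi β (β * m)))) with hw
  set n : ℝ → ℝ := fun y => g (√(N : ℝ) / 2 * (Real.tanh y - m))
    * (√(N : ℝ) / 2 * (1 - Real.tanh y ^ 2)) with hn
  have hqc : ∀ σ : Fin N → Bool, Continuous fun y => symW (Real.tanh y) σ := fun σ =>
    (continuous_symW σ).comp continuous_tanh'
  have hqn : ∀ y (σ : Fin N → Bool), 0 ≤ symW (Real.tanh y) σ := fun y σ =>
    symW_nonneg (Real.abs_tanh_lt_one y).le σ
  have hqs : ∀ y, ∑ σ : Fin N → Bool, symW (Real.tanh y) σ = 1 := fun y => sum_symW _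
  have hμw : ∀ σ, μ N σ = A / Z N * ∫ y in Set.Ioi 0, w y * symW (Real.tanh y) σ := fun σ => by
    rw [hμ, hAeq]; ring
  have hmass : A / Z N * ∫ y in Set.Ioi 0, w y = 1 := by
    rw [← sμ]
    simp_rw [hμw]
    rw [← Finset.mul_sum, ← integral_finsetSum]
    · simp_rw [← Finset.mul_sum, hqs, mul_one]
    · intro σ _
      refine Integrable.mul_bdd (c := 1) wi (hqc σ).aestronglyMeasurable ?_
      refine Eventually.of_forall fun y => ?_
      rw [Real.norm_eq_abs, abs_of_nonneg (hqn y σ), ← hqs y]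
      exact Finset.single_le_sum (fun i _ => hqn y i) (Finset.mem_univ σ)
  have hAZ : 0 < A / Z N := div_pos hA hZ0
  have hBS : A / Z N * ∫ y in Set.Ioi 0 \ Set.Ioc l r, w y ≤ B N := by
    have h := mul_le_mul_of_nonneg_left
      (wtail (measurableSet_Ioi.diff measurableSet_Ioc) Set.sdiff_subset hout) hAZ.le
    refine h.trans (le_of_eq ?_)
    have e1 : -(k / 2) * (N * (2 * L N) ^ 2) = -(2 * k) * T ^ 2 := by
      rw [hLN, mul_pow, div_pow, Real.sq_sqrt hN'.le]
      field_simp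
    rw [e1, mul_left_comm, hmass, mul_one]
  have hcn : Continuous n := by
    have := continuous_tanh'
    rw [hn]
    fun_prop
  set tail := ∫ t in (Set.Icc (-T) T)ᶜ, g t with htl
  have htail0 : 0 ≤ tail := integral_nonneg g0
  have hνn : ∀ σ, ν N σ = (∫ y in Set.Ioc l r, n y * symW (Real.tanh y) σ)
      + symW m σ * tail := fun σ => by
    rw [hνs, core_subst hN gc (by rw [h2L]; exact tl) (by rw [h2L]; exact tr),
      intervalIntegral.integral_of_le hlr]
  have ha0 : ∀ σ : Fin N → Bool, 0 ≤ symW m σ * tail := fun σ =>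
    mul_nonneg (symW_nonneg (by rw [abs_of_pos hm0]; exact hm1.le) σ) htail0
  have sa : ∑ σ : Fin N → Bool, symW m σ * tail ≤ α N := by
    rw [← Finset.sum_mul, sum_symW, one_mul]
    exact htail T hT0.le
  have h1m : 0 < 1 - m ^ 2 := by nlinarith
  have hdens : ∀ y ∈ Set.Ioc l r,
      w y ≤ √(2 * π * r2) * 2 / (√(N : ℝ) * (1 - m ^ 2)) * c N * n y ∧
      n y ≤ c N / (√(2 * π * r2) * 2 / (√(N : ℝ) * (1 - m ^ 2))) * w y := by
    intro y hy
    obtain ⟨w', n', K', c', ew, en, eK, ec, h1, h2⟩ :=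
      hcomp N (L N) y hN hLpos.le (by linarith) (hSpos hy).le (hin y hy)
    rw [← hgauss] at en
    subst ew en eK ec
    exact ⟨h1, h2⟩
  have hr2s : 0 < √(2 * π * r2) := Real.sqrt_pos.2 (by positivity)
  obtain ⟨hb, ha⟩ := mixture_compare (q := fun y σ => symW (Real.tanh y) σ)
    (w := w) (n := n) (K := √(2 * π * r2) * 2 / (√(N : ℝ) * (1 - m ^ 2))) (c := c N)
    (α := α N) (B := B N) (a := fun σ => symW m σ * tail)
    measurableSet_Ioc hSpos hqc hqn hqs (fun y => (Real.exp_pos _).le) wi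
    hcn.integrableOn_Ioc hAZ (by positivity) (by linarith) hα1 hB1
    (fun y hy => (hdens y hy).1) (fun y hy => (hdens y hy).2) hμw hνn sμ sν ha0 sa hBS
  refine ⟨sμ, sν, fun σ => le_trans ?_ (lowμ σ), fun σ => le_trans ?_ (lowν σ), hc1,
    by positivity, hα1, by positivity, hB1, hb, _, ha0, sa, ha⟩
  · rw [Real.exp_le_exp]; nlinarith
  · rw [← Real.exp_log hq0, ← Real.exp_nat_mul, Real.exp_le_exp, Real.log_exp]; nlinarith

/-- For the Curie–Weiss model with `β > 1` and `h = 0`, let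
`m⁺ ∈ (0,1)` be the largest solution of `z = tanh(βz)` and
`r² = β(1−(m⁺)²)²/(4−4β(1−(m⁺)²))`. With `ξ̃ ∼ N(0, r²)` truncated at `N^δ`
(`0 < δ < 1/6`) and the two-component mixture `ν_N` below, one has
`H(μ_N|ν_N) → 0` and `H(ν_N|μ_N) → 0`. Spins `±1` are encoded by `Bool`. -/
theorem stmt_7
    (β : ℝ) (hβ : 1 < β)
    (mp : ℝ) (hmp_mem : mp ∈ Set.Ioo (0 : ℝ) 1)
    (hmp_sol : mp = Real.tanh (β * mp))
    (hmp_largest : ∀ z : ℝ, z = Real.tanh (β * z) → z ≤ mp)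
    (r2 : ℝ) (hr2 : r2 = β * (1 - mp ^ 2) ^ 2 / (4 - 4 * β * (1 - mp ^ 2)))
    (δ : ℝ) (hδ0 : 0 < δ) (hδ : δ < 1 / 6)
    (spin : Bool → ℝ) (hspin : ∀ b, spin b = if b then 1 else -1)
    (Z : ℕ → ℝ)
    (hZ : ∀ N : ℕ, Z N = ∑ σ : Fin N → Bool,
      Real.exp (β / (2 * N) * ∑ i, ∑ j, spin (σ i) * spin (σ j)))
    (μ : ∀ N : ℕ, (Fin N → Bool) → ℝ)
    (hμ : ∀ N σ, μ N σ =
      Real.exp (β / (2 * N) * ∑ i, ∑ j, spin (σ i) * spin (σ j)) / Z N)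
    (gauss : ℝ → ℝ)
    (hgauss : ∀ t, gauss t = Real.exp (-t ^ 2 / (2 * r2)) / Real.sqrt (2 * Real.pi * r2))
    (ν : ∀ N : ℕ, (Fin N → Bool) → ℝ)
    (hν : ∀ N σ, ν N σ = (1 / 2 : ℝ) *
      ∫ t : ℝ,
        ((∏ i, ((1 + spin (σ i) * mp) / 2 +
            spin (σ i) * (if |t| ≤ (N : ℝ) ^ δ then t else 0) / Real.sqrt N)) +
          ∏ i, ((1 - spin (σ i) * mp) / 2 +
            spin (σ i) * (if |t| ≤ (N : ℝ) ^ δ then t else 0) / Real.sqrt N)) * gauss t) :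
    Tendsto (fun N => relEnt (μ N) (ν N)) atTop (nhds 0) ∧
      Tendsto (fun N => relEnt (ν N) (μ N)) atTop (nhds 0) := by
  have hsv : spin = spinVal := by
    funext b
    rw [hspin, spinVal]
  subst hsv
  obtain ⟨hm0, hm1⟩ := hmp_mem
  have hβ0 : 0 < β := by linarith
  have h1m : 0 < 1 - mp ^ 2 := by nlinarith
  have hlt := beta_mul_lt_one hβ0 hm0 hmp_sol
  have hden : 0 < 4 - 4 * β * (1 - mp ^ 2) := by linarith
  have hr : 0 < r2 := by rw [hr2]; positivity
  have hκ : 2 * (1 / (8 * r2)) * (1 - mp ^ 2) ^ 2 = 1 / β - (1 - mp ^ 2) := by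
    rw [hr2]
    field_simp
    ring
  obtain ⟨c, α, B, M, hM, hc, hα, hNα, hB, hNB, hev⟩ :=
    cw_compare hβ hm0 hm1 hmp_sol hr hκ hδ0 hδ hZ hμ hgauss hν
  have lim : ∀ {ε : ℕ → ℝ}, Tendsto ε atTop (nhds 0) →
      Tendsto (fun N => c N ^ 2 / (1 - ε N)) atTop (nhds 1) := fun {ε} hε => by
    have h := (hc.pow 2).div (hε.const_sub 1) (by norm_num)
    rw [one_pow, sub_zero, div_one] at h
    exact h
  have one_le : ∀ {x ε : ℝ}, 1 ≤ x → 0 ≤ ε → ε < 1 → 1 ≤ x ^ 2 / (1 - ε) := fun hx h0 h1 => by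
    rw [one_le_div (by linarith)]
    nlinarith
  constructor
  · refine tendsto_relEnt hM (lim hα) hB hNB ?_
    filter_upwards [hev] with N ⟨sμ, sν, lμ, lν, c1, α0, α1, B0, B1, hb, ha⟩
    exact ⟨fun σ => (Real.exp_pos _).trans_le (lμ σ), sμ, sν, lν, one_le c1 α0 α1, hb⟩
  · refine tendsto_relEnt hM (lim hB) hα hNα ?_
    filter_upwards [hev] with N ⟨sμ, sν, lμ, lν, c1, α0, α1, B0, B1, hb, ha⟩
    exact ⟨fun σ => (Real.exp_pos _).trans_le (lν σ), sν, sμ, lμ, one_le c1 B0 B1, ha⟩
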